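/- arXiv:1506.04478 — 3 statements merged into one kernel-verified Lean document; each statement's English description precedes it below -/
import Mathlib

section
/- Let k be a field and f, g separable cubic polynomials in k[x]. There exists a linear fractional transformation of P^1(k) (an element of PGL_2(k)) mapping the set of roots of f (in an algebraic closure) bijectively onto the set of roots of g if and only if f and g have the same number of roots in k. -/
open Polynomial

/-! A linear fractional transformation is determined up to scalars by its values at three points,
and the matrices taking three prescribed values form a line. If the points and the values are
matched Galois-equivariantly, this line is stable under the Galois group; dividing a matrix on it by
a nonzero entry then makes it Galois-invariant, so its entries lie in `k`. Hence `f` and `g` are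
related over `k` exactly when there is a Galois-equivariant bijection between their roots. When the
Galois group acts through a cyclic group, such a bijection is a conjugation between two permutations
of three letters, and these are conjugate as soon as they have equally many fixed points. -/

section CyclicActions

lemma eq_zero_or_eq_singleton_sum {s : Multiset ℕ} (hs : ∀ n ∈ s, 2 ≤ n) (hsum : s.sum < 4) :
    s = 0 ∨ s = {s.sum} := by
  induction s using Multiset.induction_on with
  | empty => exact Or.inl rfl
  | cons a s _ =>
    rcases s.empty_or_exists_mem with rfl | ⟨b, hb⟩
    · exact Or.inr (by simp)
    · have ha : 2 ≤ a := hs a (Multiset.mem_cons_self a s)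
      have hb_two : 2 ≤ b := hs b (Multiset.mem_cons_of_mem hb)
      have hb_le : b ≤ s.sum := Multiset.single_le_sum (fun _ _ => Nat.zero_le _) b hb
      rw [Multiset.sum_cons] at hsum
      omega

lemma isConj_of_card_fixedPoints_eq {α : Type*} [Finite α] (hα : Nat.card α < 4)
    {σ τ : Equiv.Perm α}
    (h : Nat.card (Function.fixedPoints σ) = Nat.card (Function.fixedPoints τ)) :
    IsConj σ τ := by
  classical
  have := Fintype.ofFinite α
  simp only [Nat.card_eq_fintype_card, Equiv.Perm.card_fixedPoints] at hα h
  have hσ_le := σ.sum_cycleType_le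
  have hτ_le := τ.sum_cycleType_le
  have hsum : σ.cycleType.sum = τ.cycleType.sum := by omega
  have two_le (ρ : Equiv.Perm α) : ∀ n ∈ ρ.cycleType, 2 ≤ n :=
    fun _ => Equiv.Perm.two_le_of_mem_cycleType
  rw [Equiv.Perm.isConj_iff_cycleType_eq]
  rcases eq_zero_or_eq_singleton_sum (two_le σ) (by omega) with hσ | hσ <;>
    rcases eq_zero_or_eq_singleton_sum (two_le τ) (by omega) with hτ | hτ
  · rw [hσ, hτ]
  · exact absurd (two_le τ 0 (by rw [hτ, ← hsum, hσ]; simp)) (by simp)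
  · exact absurd (two_le σ 0 (by rw [hσ, hsum, hτ]; simp)) (by simp)
  · rw [hσ, hτ, hsum]

variable {G α β : Type*} [Group G] [MulAction G α] [MulAction G β]

lemma card_fixedPoints_eq_of_equivariant_equiv (e : α ≃ β) (he : ∀ (s : G) x, e (s • x) = s • e x) :
    Nat.card (MulAction.fixedPoints G α) = Nat.card (MulAction.fixedPoints G β) :=
  Nat.card_congr <| e.subtypeEquiv fun x => by
    simp only [MulAction.mem_fixedPoints, ← he, e.apply_eq_iff_eq]

lemma fixedPoints_eq_fixedPoints_toPerm {s : G} (hs : ∀ t, t ∈ Subgroup.zpowers s) :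
    MulAction.fixedPoints G α = Function.fixedPoints (MulAction.toPerm s : Equiv.Perm α) := by
  ext x
  refine ⟨fun hx => hx s, fun hx t => ?_⟩
  obtain ⟨n, rfl⟩ := Subgroup.mem_zpowers_iff.1 (hs t)
  exact MulAction.mem_fixedBy_zpow hx n

theorem exists_equivariant_equiv_iff_card_fixedPoints_eq [IsCyclic G] [Finite α] [Finite β]
    (hα : Nat.card α < 4) (hαβ : Nat.card α = Nat.card β) :
    (∃ e : α ≃ β, ∀ (s : G) x, e (s • x) = s • e x) ↔
      Nat.card (MulAction.fixedPoints G α) = Nat.card (MulAction.fixedPoints G β) := by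
  refine ⟨fun ⟨e, he⟩ => card_fixedPoints_eq_of_equivariant_equiv e he, fun h => ?_⟩
  obtain ⟨s, hs⟩ := IsCyclic.exists_generator (α := G)
  obtain ⟨e₀⟩ := Finite.card_eq.1 hαβ
  let τ : Equiv.Perm α := e₀.symm.permCongr (MulAction.toPerm s)
  have hτ : Nat.card (Function.fixedPoints τ) = Nat.card (MulAction.fixedPoints G β) := by
    rw [fixedPoints_eq_fixedPoints_toPerm hs]
    exact Nat.card_congr <| e₀.subtypeEquiv fun x => e₀.symm_apply_eq
  rw [← hτ, fixedPoints_eq_fixedPoints_toPerm hs] at h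
  obtain ⟨c, hc⟩ := isConj_iff.1 (isConj_of_card_fixedPoints_eq hα h)
  let e : α ≃ β := c.trans e₀
  have hom_eq : e.permCongrHom.toMonoidHom.comp (MulAction.toPermHom G α) =
      MulAction.toPermHom G β := by
    rw [MonoidHom.eq_iff_eq_on_generator hs]
    ext y
    simpa [e, τ] using congrArg e₀ (DFunLike.congr_fun hc (e₀.symm y))
  exact ⟨e, fun t x => by simpa using DFunLike.congr_fun (DFunLike.congr_fun hom_eq t) (e x)⟩

end CyclicActions

section Mobius

section CommRing

variable {R : Type*} [CommRing R]

/-- The numerator of the linear fractional transformation `x ↦ (a x + b) / (c x + d)` with matrix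
`!![a, b; c, d]`. -/
def mobiusNum (M : Matrix (Fin 2) (Fin 2) R) (x : R) : R := M 0 0 * x + M 0 1

/-- The denominator of the linear fractional transformation `x ↦ (a x + b) / (c x + d)` with matrix
`!![a, b; c, d]`. -/
def mobiusDenom (M : Matrix (Fin 2) (Fin 2) R) (x : R) : R := M 1 0 * x + M 1 1

/-- The matrices whose linear fractional transformation sends `a i` to `b i` for all `i`. The
condition is stated with denominators cleared, so that it is linear in the matrix; singular matrices
are therefore included. -/
def mobiusInterpolants {ι : Type*} (a b : ι → R) : Submodule R (Matrix (Fin 2) (Fin 2) R) :=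
  LinearMap.ker
    { toFun := fun M i => mobiusNum M (a i) - b i * mobiusDenom M (a i)
      map_add' := fun M N => by
        ext i
        simp only [mobiusNum, mobiusDenom, Matrix.add_apply, Pi.add_apply]
        ring
      map_smul' := fun r M => by
        ext i
        simp only [mobiusNum, mobiusDenom, Matrix.smul_apply, Pi.smul_apply, smul_eq_mul,
          RingHom.id_apply]
        ring :
      Matrix (Fin 2) (Fin 2) R →ₗ[R] ι → R }

lemma mem_mobiusInterpolants {ι : Type*} {a b : ι → R} {M : Matrix (Fin 2) (Fin 2) R} :
    M ∈ mobiusInterpolants a b ↔ ∀ i, mobiusNum M (a i) = b i * mobiusDenom M (a i) := by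
  simp [mobiusInterpolants, funext_iff, sub_eq_zero]

lemma mobiusDenom_sub_smul (M N : Matrix (Fin 2) (Fin 2) R) (c x : R) :
    mobiusDenom (N - c • M) x = mobiusDenom N x - c * mobiusDenom M x := by
  simp only [mobiusDenom, Matrix.sub_apply, Matrix.smul_apply, smul_eq_mul]
  ring

lemma det_mul_sub_eq (M : Matrix (Fin 2) (Fin 2) R) (x y : R) :
    M.det * (x - y) = mobiusNum M x * mobiusDenom M y - mobiusNum M y * mobiusDenom M x := by
  rw [Matrix.det_fin_two, mobiusNum, mobiusNum, mobiusDenom, mobiusDenom]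
  ring

lemma mobiusDenom_ne_zero {M : Matrix (Fin 2) (Fin 2) R} (hM : M.det ≠ 0) {x y : R}
    (h : mobiusNum M x = y * mobiusDenom M x) : mobiusDenom M x ≠ 0 := by
  have det_eq : M.det = M 0 0 * mobiusDenom M x - M 1 0 * mobiusNum M x := by
    rw [Matrix.det_fin_two, mobiusNum, mobiusDenom]
    ring
  contrapose! hM
  rw [det_eq, h, hM, mul_zero, mul_zero, mul_zero, sub_zero]

variable [IsDomain R]

lemma affine_eq_zero {p q x y : R} (hxy : x ≠ y) (hx : p * x + q = 0) (hy : p * y + q = 0) :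
    p = 0 ∧ q = 0 := by
  have hp : p = 0 := by
    have : p * (x - y) = 0 := by linear_combination hx - hy
    exact (mul_eq_zero.1 this).resolve_right (sub_ne_zero.2 hxy)
  exact ⟨hp, by simpa [hp] using hx⟩

variable {ι : Type*} {a b : ι → R} {M : Matrix (Fin 2) (Fin 2) R}

lemma eq_zero_of_mobiusDenom_eq_zero (ha : a.Injective) (hM : M ∈ mobiusInterpolants a b) {i j : ι}
    (hij : i ≠ j) (hi : mobiusDenom M (a i) = 0) (hj : mobiusDenom M (a j) = 0) : M = 0 := by
  rw [mem_mobiusInterpolants] at hM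
  have hni : mobiusNum M (a i) = 0 := by rw [hM, hi, mul_zero]
  have hnj : mobiusNum M (a j) = 0 := by rw [hM, hj, mul_zero]
  obtain ⟨h00, h01⟩ := affine_eq_zero (ha.ne hij) hni hnj
  obtain ⟨h10, h11⟩ := affine_eq_zero (ha.ne hij) hi hj
  ext k l
  fin_cases k <;> fin_cases l <;> assumption

lemma mobiusDenom_eq_zero_or (hb : b.Injective) (hM : M ∈ mobiusInterpolants a b)
    (hdet : M.det = 0) {i j : ι} (hij : i ≠ j) :
    mobiusDenom M (a i) = 0 ∨ mobiusDenom M (a j) = 0 := by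
  rw [mem_mobiusInterpolants] at hM
  have h : (b i - b j) * (mobiusDenom M (a i) * mobiusDenom M (a j)) = 0 := by
    have := det_mul_sub_eq M (a i) (a j)
    rw [hdet, hM, hM] at this
    linear_combination -this
  exact mul_eq_zero.1 ((mul_eq_zero.1 h).resolve_left (sub_ne_zero.2 (hb.ne hij)))

variable [Fintype ι]

lemma eq_zero_of_mem_mobiusInterpolants_of_det_eq_zero (hι : 2 < Fintype.card ι)
    (ha : a.Injective) (hb : b.Injective) (hM : M ∈ mobiusInterpolants a b) (hdet : M.det = 0) :
    M = 0 := by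
  obtain ⟨i, j, l, hij, hil, hjl⟩ := Fintype.two_lt_card_iff.1 hι
  rcases mobiusDenom_eq_zero_or hb hM hdet hij with hi | hj
  · rcases mobiusDenom_eq_zero_or hb hM hdet hjl with hj | hl
    · exact eq_zero_of_mobiusDenom_eq_zero ha hM hij hi hj
    · exact eq_zero_of_mobiusDenom_eq_zero ha hM hil hi hl
  · rcases mobiusDenom_eq_zero_or hb hM hdet hil with hi | hl
    · exact eq_zero_of_mobiusDenom_eq_zero ha hM hij hi hj
    · exact eq_zero_of_mobiusDenom_eq_zero ha hM hjl hj hl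

end CommRing

variable {K ι : Type*} [Field K] [Fintype ι]

lemma exists_mem_mobiusInterpolants_ne_zero (hι : Fintype.card ι < 4) (a b : ι → K) :
    ∃ M ∈ mobiusInterpolants a b, M ≠ 0 :=
  Submodule.exists_mem_ne_zero_of_ne_bot <| LinearMap.ker_ne_bot_of_finrank_lt <| by
    simpa [Module.finrank_matrix] using hι

theorem exists_eq_smul_of_mem_mobiusInterpolants (hι : 2 < Fintype.card ι) {a b : ι → K}
    (ha : a.Injective) (hb : b.Injective) {M N : Matrix (Fin 2) (Fin 2) K}
    (hM : M ∈ mobiusInterpolants a b) (hM0 : M ≠ 0) (hN : N ∈ mobiusInterpolants a b) :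
    ∃ c : K, N = c • M := by
  obtain ⟨i, j, -, hij, -⟩ := Fintype.two_lt_card_iff.1 hι
  have hdet : M.det ≠ 0 :=
    mt (eq_zero_of_mem_mobiusInterpolants_of_det_eq_zero hι ha hb hM) hM0
  -- With this `c`, the matrix `N - c • M` kills the vector `(a i, 1)`, so it is singular.
  let c := mobiusDenom N (a i) / mobiusDenom M (a i)
  have hmem : N - c • M ∈ mobiusInterpolants a b :=
    Submodule.sub_mem _ hN (Submodule.smul_mem _ c hM)
  have hdenom : mobiusDenom (N - c • M) (a i) = 0 := by
    rw [mobiusDenom_sub_smul,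
      div_mul_cancel₀ _ (mobiusDenom_ne_zero hdet (mem_mobiusInterpolants.1 hM i)), sub_self]
  have hdet_sub : (N - c • M).det = 0 := by
    have := det_mul_sub_eq (N - c • M) (a i) (a j)
    rw [mem_mobiusInterpolants.1 hmem i, hdenom, mul_zero, zero_mul, mul_zero, sub_zero] at this
    exact (mul_eq_zero.1 this).resolve_right (sub_ne_zero.2 (ha.ne hij))
  exact ⟨c, sub_eq_zero.1 <|
    eq_zero_of_mem_mobiusInterpolants_of_det_eq_zero hι ha hb hmem hdet_sub⟩

/-- The linear fractional transformation with matrix `M` maps `S` bijectively onto `T`. Division by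
zero being `0`, the condition that no point of `S` goes to infinity is stated separately. -/
def MobiusBijOn (M : Matrix (Fin 2) (Fin 2) K) (S T : Set K) : Prop :=
  (∀ x ∈ S, mobiusDenom M x ≠ 0) ∧ Set.BijOn (fun x => mobiusNum M x / mobiusDenom M x) S T

lemma mobiusBijOn_of_equiv {M : Matrix (Fin 2) (Fin 2) K} (hM : M.det ≠ 0) {S T : Set K}
    (e : S ≃ T) (h : M ∈ mobiusInterpolants ((↑) : S → K) fun x => e x) : MobiusBijOn M S T := by
  rw [mem_mobiusInterpolants] at h
  have hdenom (x : S) : mobiusDenom M x ≠ 0 := mobiusDenom_ne_zero hM (h x)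
  have hval (x : S) : mobiusNum M x / mobiusDenom M x = e x := (div_eq_iff (hdenom x)).2 (h x)
  refine ⟨fun x hx => hdenom ⟨x, hx⟩, fun x hx => ?_, fun x hx y hy hxy => ?_, fun y hy => ?_⟩
  · simpa only [hval ⟨x, hx⟩] using (e ⟨x, hx⟩).2
  · have : e ⟨x, hx⟩ = e ⟨y, hy⟩ :=
      Subtype.ext <| by simpa only [hval ⟨x, hx⟩, hval ⟨y, hy⟩] using hxy
    exact congrArg Subtype.val (e.injective this)
  · exact ⟨e.symm ⟨y, hy⟩, (e.symm ⟨y, hy⟩).2, by simp [hval]⟩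

end Mobius

section GaloisDescent

variable {k K G : Type*} [Field k] [Field K] [Algebra k K] [Group G] [MulSemiringAction G K]

lemma exists_map_algebraMap_eq_smul [Algebra.IsInvariant k K G] {m n : Type*} {M : Matrix m n K}
    (hM : M ≠ 0) (h : ∀ s : G, ∃ c : K, M.map (s • ·) = c • M) :
    ∃ (N : Matrix m n k) (d : K), d ≠ 0 ∧ N.map (algebraMap k K) = d • M := by
  obtain ⟨i, j, hij⟩ : ∃ i j, M i j ≠ 0 := by
    contrapose! hM
    exact Matrix.ext hM
  have fixed (u : m) (v : n) (s : G) : s • (M u v / M i j) = M u v / M i j := by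
    obtain ⟨c, hc⟩ := h s
    have smul_entry (u : m) (v : n) : s • M u v = c * M u v := congrFun (congrFun hc u) v
    have hc0 : c ≠ 0 := by
      rintro rfl
      exact hij ((smul_eq_zero_iff_eq s).1 (by rw [smul_entry, zero_mul]))
    rw [smul_div₀', smul_entry, smul_entry, mul_div_mul_left _ _ hc0]
  choose N hN using fun u v =>
    Algebra.IsInvariant.isInvariant (A := k) (G := G) (M u v / M i j) (fixed u v)
  refine ⟨Matrix.of N, (M i j)⁻¹, inv_ne_zero hij, ?_⟩
  ext u v
  rw [Matrix.map_apply, Matrix.of_apply, hN, Matrix.smul_apply, smul_eq_mul, div_eq_inv_mul]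

variable [SMulCommClass G k K]

lemma card_fixedPoints_rootSet [Algebra.IsInvariant k K G] [DecidableEq k] (f : k[X]) :
    Nat.card (MulAction.fixedPoints G (f.rootSet K)) = f.roots.toFinset.card := by
  have image_eq : (↑) '' MulAction.fixedPoints G (f.rootSet K) =
      algebraMap k K '' (f.roots.toFinset : Set k) := by
    refine Set.Subset.antisymm ?_ ?_
    · rintro _ ⟨x, hx, rfl⟩
      obtain ⟨c, hc⟩ := Algebra.IsInvariant.isInvariant (A := k) (x : K) fun s : G =>
        congrArg Subtype.val (hx s)
      have hc_root : c ∈ f.roots.toFinset := by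
        simpa [mem_rootSet, ← hc, aeval_algebraMap_apply] using x.2
      exact ⟨c, hc_root, hc⟩
    · rintro _ ⟨c, hc, rfl⟩
      have hroot : algebraMap k K c ∈ f.rootSet K := by
        simpa [mem_rootSet, aeval_algebraMap_apply] using hc
      exact ⟨⟨_, hroot⟩, fun s => Subtype.ext (smul_algebraMap s c), rfl⟩
  rw [Nat.card_coe_set_eq, ← Set.ncard_image_of_injective _ Subtype.val_injective, image_eq,
    Set.ncard_image_of_injective _ (algebraMap k K).injective, Set.ncard_coe_finset]

lemma map_smul_mem_mobiusInterpolants {f g : k[X]} {e : f.rootSet K ≃ g.rootSet K}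
    (he : ∀ (s : G) x, e (s • x) = s • e x) {M : Matrix (Fin 2) (Fin 2) K}
    (hM : M ∈ mobiusInterpolants ((↑) : f.rootSet K → K) fun x => e x) (s : G) :
    M.map (s • ·) ∈ mobiusInterpolants ((↑) : f.rootSet K → K) fun x => e x := by
  rw [mem_mobiusInterpolants] at hM ⊢
  intro x
  obtain ⟨y, rfl⟩ := MulAction.surjective s x
  simpa [mobiusNum, mobiusDenom, he, smul_mul'] using congrArg (s • ·) (hM y)

lemma exists_mobiusBijOn_of_equivariant_equiv [Algebra.IsInvariant k K G] {f g : k[X]}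
    (hf : Fintype.card (f.rootSet K) = 3) (e : f.rootSet K ≃ g.rootSet K)
    (he : ∀ (s : G) x, e (s • x) = s • e x) :
    ∃ M : Matrix (Fin 2) (Fin 2) k, M.det ≠ 0 ∧
      MobiusBijOn (M.map (algebraMap k K)) (f.rootSet K) (g.rootSet K) := by
  have he_inj : Function.Injective fun x => (e x : K) := Subtype.val_injective.comp e.injective
  have hcard : 2 < Fintype.card (f.rootSet K) := by omega
  obtain ⟨M, hM, hM0⟩ := exists_mem_mobiusInterpolants_ne_zero (hf.trans_lt (by norm_num))
    ((↑) : f.rootSet K → K) fun x => (e x : K)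
  obtain ⟨N, d, hd, hN⟩ := exists_map_algebraMap_eq_smul (k := k) hM0 fun s : G =>
    exists_eq_smul_of_mem_mobiusInterpolants hcard Subtype.val_injective he_inj hM hM0
      (map_smul_mem_mobiusInterpolants he hM s)
  have hmem : N.map (algebraMap k K) ∈
      mobiusInterpolants ((↑) : f.rootSet K → K) fun x => (e x : K) :=
    hN ▸ Submodule.smul_mem _ d hM
  have hdet : (N.map (algebraMap k K)).det ≠ 0 := fun h =>
    smul_ne_zero hd hM0 <| hN ▸
      eq_zero_of_mem_mobiusInterpolants_of_det_eq_zero hcard Subtype.val_injective he_inj hmem h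
  refine ⟨N, fun h => hdet ?_, mobiusBijOn_of_equiv hdet e hmem⟩
  rw [← RingHom.mapMatrix_apply, ← RingHom.map_det, h, map_zero]

lemma exists_equivariant_equiv_of_mobiusBijOn {f g : k[X]} {M : Matrix (Fin 2) (Fin 2) k}
    (h : MobiusBijOn (M.map (algebraMap k K)) (f.rootSet K) (g.rootSet K)) :
    ∃ e : f.rootSet K ≃ g.rootSet K, ∀ (s : G) x, e (s • x) = s • e x := by
  refine ⟨h.2.equiv, fun s x => Subtype.ext ?_⟩
  change mobiusNum _ (s • (x : K)) / mobiusDenom _ (s • (x : K)) =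
    s • (mobiusNum _ (x : K) / mobiusDenom _ (x : K))
  simp [mobiusNum, mobiusDenom, smul_div₀', smul_mul', smul_algebraMap]

theorem exists_mobiusBijOn_iff_exists_equivariant_equiv [Algebra.IsInvariant k K G] {f g : k[X]}
    (hf : Fintype.card (f.rootSet K) = 3) :
    (∃ M : Matrix (Fin 2) (Fin 2) k, M.det ≠ 0 ∧
      MobiusBijOn (M.map (algebraMap k K)) (f.rootSet K) (g.rootSet K)) ↔
    ∃ e : f.rootSet K ≃ g.rootSet K, ∀ (s : G) x, e (s • x) = s • e x :=
  ⟨fun ⟨_, _, hM⟩ => exists_equivariant_equiv_of_mobiusBijOn hM,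
    fun ⟨e, he⟩ => exists_mobiusBijOn_of_equivariant_equiv hf e he⟩

end GaloisDescent

lemma isInvariant_zpowers_frobenius (k L : Type*) [Field k] [Fintype k] [Field L] [Algebra k L]
    [Algebra.IsAlgebraic k L] :
    Algebra.IsInvariant k L
      (Subgroup.zpowers (FiniteField.frobeniusAlgEquivOfAlgebraic k L)) where
  isInvariant x hx := by
    have hpow : x ^ Fintype.card k = x := hx ⟨_, Subgroup.mem_zpowers _⟩
    have hroot : ((X ^ Nat.card k - X : k[X]).map (algebraMap k L)).IsRoot x := by
      simp [hpow]
    refine splits_X_pow_nat_card_sub_X.mem_range_of_isRoot ?_ hroot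
    exact FiniteField.X_pow_card_sub_X_ne_zero k Finite.one_lt_card

theorem stmt0_general {k K : Type*} (G : Type*) [Field k] [DecidableEq k] [Field K] [Algebra k K]
    [Group G] [IsCyclic G] [MulSemiringAction G K] [SMulCommClass G k K]
    [Algebra.IsInvariant k K G] {f g : k[X]}
    (hf : f.Separable) (hg : g.Separable) (hfd : f.natDegree = 3) (hgd : g.natDegree = 3)
    (hfs : (f.map (algebraMap k K)).Splits) (hgs : (g.map (algebraMap k K)).Splits) :
    (∃ M : Matrix (Fin 2) (Fin 2) k, M.det ≠ 0 ∧
      MobiusBijOn (M.map (algebraMap k K)) {x | aeval x f = 0} {x | aeval x g = 0}) ↔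
    f.roots.toFinset.card = g.roots.toFinset.card := by
  have rootSet_eq {h : k[X]} (hh : h.Separable) : {x : K | aeval x h = 0} = h.rootSet K :=
    Set.ext fun _ => (mem_rootSet_of_ne hh.ne_zero).symm
  have hf3 : Fintype.card (f.rootSet K) = 3 := hfd ▸ card_rootSet_eq_natDegree hf hfs
  have hg3 : Fintype.card (g.rootSet K) = 3 := hgd ▸ card_rootSet_eq_natDegree hg hgs
  rw [rootSet_eq hf, rootSet_eq hg, exists_mobiusBijOn_iff_exists_equivariant_equiv (G := G) hf3,
    exists_equivariant_equiv_iff_card_fixedPoints_eq (by simp [hf3]) (by simp [hf3, hg3]),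
    card_fixedPoints_rootSet, card_fixedPoints_rootSet]

/- STATEMENT 0.  Let `k` be a (finite) field and `f, g` separable cubic polynomials in
`k[x]`.  There is a linear fractional transformation defined over `k` (an element of
`PGL₂(k)`, represented by an invertible matrix `M`) mapping the set of roots of `f` in
an algebraic closure bijectively onto the set of roots of `g` — the roots being affine,
the transformation does not send any root to `∞`, i.e. its denominator does not vanish
at any root — if and only if `f` and `g` have the same number of roots in `k`. -/
theorem stmt0 (k : Type*) [Field k] [Fintype k] [DecidableEq k]
    (f g : k[X]) (hf : f.Separable) (hg : g.Separable)
    (hfd : f.natDegree = 3) (hgd : g.natDegree = 3) :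
    (∃ M : Matrix (Fin 2) (Fin 2) k, M.det ≠ 0 ∧
      (∀ x : AlgebraicClosure k, aeval x f = 0 →
        algebraMap k (AlgebraicClosure k) (M 1 0) * x +
          algebraMap k (AlgebraicClosure k) (M 1 1) ≠ 0) ∧
      Set.BijOn
        (fun x : AlgebraicClosure k =>
          (algebraMap k (AlgebraicClosure k) (M 0 0) * x +
              algebraMap k (AlgebraicClosure k) (M 0 1)) /
            (algebraMap k (AlgebraicClosure k) (M 1 0) * x +
              algebraMap k (AlgebraicClosure k) (M 1 1)))
        {x | aeval x f = 0} {x | aeval x g = 0}) ↔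
    f.roots.toFinset.card = g.roots.toFinset.card := by
  have := isInvariant_zpowers_frobenius k (AlgebraicClosure k)
  exact stmt0_general (Subgroup.zpowers (FiniteField.frobeniusAlgEquivOfAlgebraic k
    (AlgebraicClosure k))) hf hg hfd hgd (IsAlgClosed.splits _) (IsAlgClosed.splits _)
end

section
/- Let k be a finite field and f a separable cubic polynomial in k[x]. Let n(f) be the number of automorphisms of P^1_k (elements of PGL_2(k)) that permute the set of roots of f. Then n(f) = 3 if f has no root in k, n(f) = 2 if f has exactly one root in k, and n(f) = 6 if f has three roots in k. -/
open Polynomial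

/-!
A matrix `M ∈ GL₂(k)` permuting the roots of `f` in a splitting extension induces a permutation `π`
of the roots, and `π` determines `M` up to scalars because a Möbius transformation fixing three
points is trivial. Since `M` has entries in `k`, `π` commutes with the Galois group. Conversely, if
`π` commutes with the Galois group, the Lagrange polynomial with values `π x` at the roots `x` has
coefficients in `k`, and modulo the cubic `f` it is a quotient of two linear polynomials, that is, a
Möbius transformation. Hence `n(f)` is the order of the centralizer of the Galois group in the
permutations of the three roots. When the Galois group is generated by one element `σ`, the roots in
`k` are the fixed points of `σ`, so their number determines the cycle type of `σ` and with it the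
order of the centralizer.
-/

open Matrix Matrix.GeneralLinearGroup
open Equiv (Perm)

section Mobius

variable {K : Type*} [Field K]

theorem det_ne_zero_of_mobius_injective {ι : Type*} [Fintype ι] (hι : 2 < Fintype.card ι)
    {x y : ι → K} (hx : Function.Injective x) (hy : Function.Injective y)
    {M : Matrix (Fin 2) (Fin 2) K} (hM : M ≠ 0)
    (h : ∀ i, M 0 0 * x i + M 0 1 = y i * (M 1 0 * x i + M 1 1)) : M.det ≠ 0 := by
  intro hdet
  rw [det_fin_two] at hdet
  have den_eq_zero : ∀ i j, i ≠ j → M 1 0 * x i + M 1 1 = 0 ∨ M 1 0 * x j + M 1 1 = 0 := by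
    intro i j hij
    rw [← mul_eq_zero, ← mul_right_inj' (sub_ne_zero.2 (hy.ne hij)), mul_zero]
    linear_combination (x i - x j) * hdet -
      (M 1 0 * x j + M 1 1) * h i + (M 1 0 * x i + M 1 1) * h j
  obtain ⟨i, j, hij, hi, hj⟩ :
      ∃ i j, i ≠ j ∧ M 1 0 * x i + M 1 1 = 0 ∧ M 1 0 * x j + M 1 1 = 0 := by
    obtain ⟨i, j, l, hij, hil, hjl⟩ := Fintype.two_lt_card_iff.1 hι
    have := den_eq_zero i j hij
    have := den_eq_zero i l hil
    have := den_eq_zero j l hjl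
    grind
  have eq_zero_of_two_roots : ∀ a b : K, a * x i + b = 0 → a * x j + b = 0 → a = 0 ∧ b = 0 := by
    intro a b hai haj
    have ha : a = 0 := by
      refine (mul_eq_zero.1 ?_).resolve_right (sub_ne_zero.2 (hx.ne hij))
      linear_combination hai - haj
    exact ⟨ha, by simpa [ha] using hai⟩
  obtain ⟨h10, h11⟩ := eq_zero_of_two_roots _ _ hi hj
  obtain ⟨h00, h01⟩ := eq_zero_of_two_roots (M 0 0) (M 0 1)
    (by rw [h, hi, mul_zero]) (by rw [h, hj, mul_zero])
  exact hM (by ext r s; fin_cases r <;> fin_cases s <;> assumption)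

theorem map_mem_center_iff {k : Type*} [Field k] (σ : k →+* K) {M : GL (Fin 2) k} :
    M.map σ ∈ Subgroup.center (GL (Fin 2) K) ↔ M ∈ Subgroup.center (GL (Fin 2) k) := by
  have hmap : (M.map σ).fixpointPolynomial = M.fixpointPolynomial.map σ := by
    simp [fixpointPolynomial]
  rw [mem_center_iff_val_mem_range_scalar, mem_center_iff_val_mem_range_scalar,
    ← fixpointPolynomial_eq_zero_iff, ← fixpointPolynomial_eq_zero_iff, hmap,
    Polynomial.map_eq_zero]

variable [DecidableEq K]

theorem smul_coe_eq_coe_iff_div {M : GL (Fin 2) K} {x y : K} :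
    M • (x : OnePoint K) = y ↔ M 1 0 * x + M 1 1 ≠ 0 ∧
      (M 0 0 * x + M 0 1) / (M 1 0 * x + M 1 1) = y := by
  rw [OnePoint.smul_some_eq_ite]
  split_ifs with h <;> simp [h]

theorem smul_coe_eq_coe_iff {M : GL (Fin 2) K} {x y : K} :
    M • (x : OnePoint K) = y ↔ M 0 0 * x + M 0 1 = y * (M 1 0 * x + M 1 1) := by
  rw [smul_coe_eq_coe_iff_div]
  refine ⟨fun ⟨hden, h⟩ => (div_eq_iff hden).1 h, fun h => ?_⟩
  have hden : M 1 0 * x + M 1 1 ≠ 0 := by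
    intro hden
    apply M.det_ne_zero
    rw [hden, mul_zero] at h
    rw [det_fin_two]
    linear_combination M 0 0 * hden - M 1 0 * h
  exact ⟨hden, (div_eq_iff hden).2 h⟩

theorem map_smul_coe_iff {k L : Type*} [Field k] [Field L] [DecidableEq L] [Algebra k K]
    [Algebra k L] (σ : K →ₐ[k] L) {M : GL (Fin 2) k} {x y : K} :
    M.map (algebraMap k L) • (σ x : OnePoint L) = σ y ↔
      M.map (algebraMap k K) • (x : OnePoint K) = y := by
  simp only [smul_coe_eq_coe_iff, GeneralLinearGroup.map_apply, ← σ.commutes, ← map_mul, ← map_add]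
  exact σ.injective.eq_iff

theorem mem_center_of_smul_coe_eq_self {ι : Type*} [Fintype ι] (hι : 2 < Fintype.card ι)
    {x : ι → K} (hx : Function.Injective x) {M : GL (Fin 2) K}
    (h : ∀ i, M • (x i : OnePoint K) = x i) : M ∈ Subgroup.center (GL (Fin 2) K) := by
  rw [mem_center_iff_val_mem_range_scalar, ← fixpointPolynomial_eq_zero_iff]
  have hdeg : M.fixpointPolynomial.natDegree ≤ 2 := by
    rw [fixpointPolynomial]
    compute_degree
  exact eq_zero_of_natDegree_lt_card_of_eval_eq_zero _ hx
    (fun i => fixpointPolynomial_aeval_eq_zero_iff.2 (h i)) (hdeg.trans_lt hι)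

theorem smul_eq_self_of_mem_center {M : GL (Fin 2) K} (hM : M ∈ Subgroup.center (GL (Fin 2) K))
    (x : K) : M • (x : OnePoint K) = x := by
  rw [mem_center_iff_val_mem_range_scalar, ← fixpointPolynomial_eq_zero_iff] at hM
  rw [← fixpointPolynomial_aeval_eq_zero_iff, hM, map_zero]

end Mobius

section Interpolation

theorem exists_aeval_eq_of_galois_stable {k L ι : Type*} [Field k] [Field L] [Algebra k L]
    [IsGalois k L] [Finite ι] {v r : ι → L} (hv : Function.Injective v)
    (hr : ∀ (ϕ : Gal(L/k)) (i : ι), ∃ j, v j = ϕ (v i) ∧ r j = ϕ (r i)) :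
    ∃ g : k[X], ∀ i, aeval (v i) g = r i := by
  classical
  cases nonempty_fintype ι
  set p := Lagrange.interpolate Finset.univ v r
  have hvs : Set.InjOn v (Finset.univ : Finset ι) := hv.injOn
  have eval_p (i : ι) : p.eval (v i) = r i :=
    Lagrange.eval_interpolate_at_node r hvs (Finset.mem_univ i)
  have degree_p : p.degree < (Finset.univ : Finset ι).card := Lagrange.degree_interpolate_lt r hvs
  have map_p (ϕ : Gal(L/k)) : p.map (ϕ : L →+* L) = p := by
    refine Lagrange.eq_interpolate_of_eval_eq r hvs (by rwa [degree_map]) fun j _ => ?_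
    obtain ⟨i, hvi, hri⟩ := hr ϕ.symm j
    have hvj : v j = ϕ (v i) := by rw [hvi, AlgEquiv.apply_symm_apply]
    have hrj : r j = ϕ (r i) := by rw [hri, AlgEquiv.apply_symm_apply]
    rw [hvj, hrj, ← eval_p]
    exact eval_map_apply (ϕ : L →+* L) (v i)
  obtain ⟨g, hg⟩ : p ∈ lifts (algebraMap k L) := by
    rw [lifts_iff_coeff_lifts]
    intro n
    rw [InfiniteGalois.mem_range_algebraMap_iff_fixed]
    intro ϕ
    conv_rhs => rw [← map_p ϕ, coeff_map]
    rfl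
  exact ⟨g, fun i => by rw [← eval_p, ← hg, coe_mapRingHom, eval_map_algebraMap]⟩

theorem exists_degree_lt_dvd_sub_mul {k : Type*} [Field k] {f : k[X]} {m n : ℕ} (hf : f ≠ 0)
    (hmn : f.natDegree < m + n) (g : k[X]) :
    ∃ p q : k[X], p.degree < m ∧ q.degree < n ∧ (p ≠ 0 ∨ q ≠ 0) ∧ f ∣ p - g * q := by
  -- `(p, q) ↦ p - g * q mod f` maps a space of dimension `m + n` to one of dimension `deg f`.
  let φ : degreeLT k m × degreeLT k n →ₗ[k] AdjoinRoot f :=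
    (AdjoinRoot.mkₐ f).toLinearMap ∘ₗ
      ((degreeLT k m).subtype.coprod (-(LinearMap.mulLeft k g ∘ₗ (degreeLT k n).subtype)))
  have := (AdjoinRoot.powerBasis hf).finite
  have hker : LinearMap.ker φ ≠ ⊥ := by
    apply LinearMap.ker_ne_bot_of_finrank_lt
    rw [(AdjoinRoot.powerBasis hf).finrank, AdjoinRoot.powerBasis_dim, Module.finrank_prod,
      (degreeLTEquiv k m).finrank_eq, (degreeLTEquiv k n).finrank_eq]
    simpa using hmn
  obtain ⟨⟨⟨p, hp⟩, ⟨q, hq⟩⟩, hpq, hne⟩ := (Submodule.ne_bot_iff _).1 hker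
  refine ⟨p, q, mem_degreeLT.1 hp, mem_degreeLT.1 hq, ?_, AdjoinRoot.mk_eq_zero.1 ?_⟩
  · contrapose! hne
    simp [hne]
  · simpa [φ, sub_eq_add_neg] using hpq

theorem exists_matrix_forall_root_eq_aeval_mul {k E : Type*} [Field k] [CommRing E] [Algebra k E]
    {f : k[X]} (hf : f ≠ 0) (hfd : f.natDegree ≤ 3) (g : k[X]) :
    ∃ A : Matrix (Fin 2) (Fin 2) k, A ≠ 0 ∧ ∀ x : E, aeval x f = 0 →
      algebraMap k E (A 0 0) * x + algebraMap k E (A 0 1) =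
        aeval x g * (algebraMap k E (A 1 0) * x + algebraMap k E (A 1 1)) := by
  obtain ⟨p, q, hp, hq, hpq, hdvd⟩ := exists_degree_lt_dvd_sub_mul (m := 2) (n := 2) hf (by omega) g
  have eq_linear {r : k[X]} (hr : r.degree < (2 : ℕ)) : r = C (r.coeff 1) * X + C (r.coeff 0) :=
    eq_X_add_C_of_degree_le_one (Order.le_of_lt_succ hr)
  have aeval_linear {r : k[X]} (hr : r.degree < (2 : ℕ)) (x : E) :
      aeval x r = algebraMap k E (r.coeff 1) * x + algebraMap k E (r.coeff 0) := by
    conv_lhs => rw [eq_linear hr]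
    simp
  refine ⟨!![p.coeff 1, p.coeff 0; q.coeff 1, q.coeff 0], ?_, fun x hx => ?_⟩
  · intro hA
    obtain ⟨⟨hp1, hp0⟩, hq1, hq0⟩ :
        (p.coeff 1 = 0 ∧ p.coeff 0 = 0) ∧ q.coeff 1 = 0 ∧ q.coeff 0 = 0 := by
      simpa [← Matrix.ext_iff] using hA
    refine hpq.elim (fun h => h ?_) (fun h => h ?_)
    · rw [eq_linear hp, hp1, hp0, C_0, zero_mul, add_zero]
    · rw [eq_linear hq, hq1, hq0, C_0, zero_mul, add_zero]
  · have h := aeval_eq_zero_of_dvd_aeval_eq_zero hdvd hx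
    rw [map_sub, map_mul, sub_eq_zero, aeval_linear hp, aeval_linear hq] at h
    exact h

end Interpolation

section Galois

variable {k E : Type*} [Field k] [Field E] [Algebra k E] {f : k[X]}
  [Fact (f.map (algebraMap k E)).Splits]

theorem algebraMap_rootsEquivRoots_symm (x : f.rootSet E) :
    algebraMap f.SplittingField E ((Gal.rootsEquivRoots f E).symm x) = x :=
  congrArg Subtype.val ((Gal.rootsEquivRoots f E).apply_symm_apply x)

theorem rootsEquivRoots_symm_smul (ϕ : f.Gal) (x : f.rootSet E) :
    ((Gal.rootsEquivRoots f E).symm (ϕ • x) : f.SplittingField) =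
      ϕ ((Gal.rootsEquivRoots f E).symm x) := by
  rw [Gal.smul_def, Equiv.symm_apply_apply]
  rfl

theorem mem_centralizer_range_galActionHom_iff {π : Perm (f.rootSet E)} :
    π ∈ Subgroup.centralizer ((Gal.galActionHom f E).range : Set (Perm (f.rootSet E))) ↔
      ∀ (ϕ : f.Gal) (x : f.rootSet E), π (ϕ • x) = ϕ • π x := by
  rw [Subgroup.mem_centralizer_iff]
  refine ⟨fun h ϕ x => (Equiv.congr_fun (h _ ⟨ϕ, rfl⟩) x).symm, fun h => ?_⟩
  rintro _ ⟨ϕ, rfl⟩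
  ext x
  exact congrArg Subtype.val (h ϕ x).symm

theorem exists_aeval_eq_of_mem_centralizer (hf : f.Separable) {π : Perm (f.rootSet E)}
    (hπ : π ∈ Subgroup.centralizer ((Gal.galActionHom f E).range : Set (Perm (f.rootSet E)))) :
    ∃ g : k[X], ∀ x : f.rootSet E, aeval (x : E) g = π x := by
  have := IsGalois.of_separable_splitting_field (E := f.SplittingField) hf
  let lift (x : f.rootSet E) : f.SplittingField := (Gal.rootsEquivRoots f E).symm x
  obtain ⟨g, hg⟩ := exists_aeval_eq_of_galois_stable (k := k) (v := lift) (r := lift ∘ π)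
    (Subtype.val_injective.comp (Equiv.injective _)) fun (ϕ : f.Gal) x =>
      ⟨ϕ • x, rootsEquivRoots_symm_smul ϕ x, by
        rw [Function.comp_apply, mem_centralizer_range_galActionHom_iff.1 hπ]
        exact rootsEquivRoots_symm_smul ϕ (π x)⟩
  refine ⟨g, fun x => ?_⟩
  rw [← algebraMap_rootsEquivRoots_symm x, aeval_algebraMap_apply, hg]
  exact algebraMap_rootsEquivRoots_symm (π x)

theorem mem_fixedPoints_gal_iff (hf : f.Separable) {x : f.rootSet E} :
    x ∈ MulAction.fixedPoints f.Gal (f.rootSet E) ↔ (x : E) ∈ Set.range (algebraMap k E) := by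
  have := IsGalois.of_separable_splitting_field (E := f.SplittingField) hf
  have fixed_iff : x ∈ MulAction.fixedPoints f.Gal (f.rootSet E) ↔
      ((Gal.rootsEquivRoots f E).symm x : f.SplittingField) ∈
        Set.range (algebraMap k f.SplittingField) := by
    rw [InfiniteGalois.mem_range_algebraMap_iff_fixed]
    refine forall_congr' fun ϕ => ?_
    rw [← (Gal.rootsEquivRoots f E).symm.injective.eq_iff, ← Subtype.val_inj,
      rootsEquivRoots_symm_smul]
    rfl
  rw [fixed_iff, ← algebraMap_rootsEquivRoots_symm x,
    IsScalarTower.algebraMap_eq k f.SplittingField E]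
  simp only [Set.mem_range, RingHom.comp_apply, (algebraMap f.SplittingField E).injective.eq_iff]

theorem card_fixedPoints_gal [DecidableEq k] (hf : f.Separable) :
    Nat.card (MulAction.fixedPoints f.Gal (f.rootSet E)) = f.roots.toFinset.card := by
  have himage : (fun x : f.rootSet E => (x : E)) '' MulAction.fixedPoints f.Gal (f.rootSet E) =
      algebraMap k E '' f.roots.toFinset := by
    ext z
    constructor
    · rintro ⟨x, hx, rfl⟩
      obtain ⟨a, ha⟩ := (mem_fixedPoints_gal_iff hf).1 hx
      refine ⟨a, ?_, ha⟩
      have := (mem_rootSet.1 x.2).2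
      rw [← ha, aeval_algebraMap_eq_zero_iff, coe_aeval_eq_eval] at this
      simpa [hf.ne_zero] using this
    · rintro ⟨a, ha, rfl⟩
      have hroot : algebraMap k E a ∈ f.rootSet E := by
        simpa [mem_rootSet, hf.ne_zero, aeval_algebraMap_apply] using ha
      exact ⟨⟨_, hroot⟩, (mem_fixedPoints_gal_iff hf).2 ⟨a, rfl⟩, rfl⟩
  rw [Nat.card_coe_set_eq, ← Set.ncard_image_of_injective _ Subtype.val_injective, himage,
    Set.ncard_image_of_injective _ (algebraMap k E).injective, Set.ncard_coe_finset]

theorem exists_perm_centralizer_eq [DecidableEq k] [IsCyclic f.Gal] (hf : f.Separable) :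
    ∃ σ : Perm (f.rootSet E),
      Subgroup.centralizer ((Gal.galActionHom f E).range : Set (Perm (f.rootSet E))) =
        Subgroup.centralizer {σ} ∧
      Nat.card (Function.fixedPoints σ) = f.roots.toFinset.card := by
  obtain ⟨ϕ, hϕ⟩ := isCyclic_iff_exists_zpowers_eq_top.1 ‹IsCyclic f.Gal›
  refine ⟨Gal.galActionHom f E ϕ, ?_, ?_⟩
  · rw [MonoidHom.range_eq_map, ← hϕ, MonoidHom.map_zpowers, Subgroup.zpowers_eq_closure,
      Subgroup.centralizer_closure]
  · rw [← card_fixedPoints_gal (E := E) hf]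
    congr 2
    ext x
    have : (∀ ψ : f.Gal, ψ ∈ MulAction.stabilizer f.Gal x) ↔ ϕ ∈ MulAction.stabilizer f.Gal x := by
      rw [← Subgroup.eq_top_iff', ← top_le_iff, ← hϕ, Subgroup.zpowers_le]
    exact this.symm

end Galois

section Counting

theorem card_centralizer_perm_of_card_eq_three {α : Type*} [Fintype α]
    (hα : Fintype.card α = 3) (σ : Perm α) :
    (Nat.card (Function.fixedPoints σ) = 0 → Nat.card (Subgroup.centralizer {σ}) = 3) ∧
    (Nat.card (Function.fixedPoints σ) = 1 → Nat.card (Subgroup.centralizer {σ}) = 2) ∧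
    (Nat.card (Function.fixedPoints σ) = 3 → Nat.card (Subgroup.centralizer {σ}) = 6) := by
  classical
  have hfixed : Nat.card (Function.fixedPoints σ) = 3 - σ.support.card := by
    rw [Nat.card_eq_fintype_card, Perm.card_fixedPoints, σ.sum_cycleType, hα]
  have hsupp : σ.support.card ≤ 3 := hα ▸ σ.support.card_le_univ
  rw [hfixed, Perm.nat_card_centralizer, hα]
  refine ⟨fun h => ?_, fun h => ?_, fun h => ?_⟩
  · have hσ : σ.cycleType = {3} := card_support_eq_three_iff.1 (by omega)
    simp [hσ]
  · have hσ : σ.cycleType = {2} :=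
      Perm.isSwap_iff_cycleType.1 (Perm.card_support_eq_two.1 (by omega))
    simp [hσ]
  · have hσ : σ = 1 := Perm.card_support_eq_zero.1 (by omega)
    simp [hσ, Nat.factorial]

end Counting

section RootPermuting

variable {k : Type*} [Field k]

/-- The Möbius transformation of `M` permutes the roots of `f` in `E`. The first clause says that no
root is sent to `∞`: in the second, a zero denominator would send it to `x / 0 = 0`. -/
def PermutesRoots (f : k[X]) (E : Type*) [Field E] [Algebra k E] (M : GL (Fin 2) k) : Prop :=
  (∀ x : E, aeval x f = 0 →
    algebraMap k E (M.val 1 0) * x + algebraMap k E (M.val 1 1) ≠ 0) ∧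
  Set.BijOn
    (fun x : E => (algebraMap k E (M.val 0 0) * x + algebraMap k E (M.val 0 1)) /
      (algebraMap k E (M.val 1 0) * x + algebraMap k E (M.val 1 1)))
    {x | aeval x f = 0} {x | aeval x f = 0}

/-- The number `n(f)` of elements of `PGL₂(k)`, encoded as `GL₂(k)` modulo its center, that permute
the roots of `f` in `E`. -/
noncomputable def numRootPermuting (f : k[X]) (E : Type*) [Field E] [Algebra k E] : ℕ :=
  Nat.card {T : GL (Fin 2) k ⧸ Subgroup.center (GL (Fin 2) k) //
    ∃ M : GL (Fin 2) k, QuotientGroup.mk M = T ∧ PermutesRoots f E M}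

/-- The group of pairs `(M, π)` where `M` acts on the roots of `f` in `E` as the permutation `π`.
Its projections to `PGL₂(k)` and to the permutations of the roots have the same kernel, which is how
elements of `PGL₂(k)` are counted by permutations. -/
def mobiusGraph (f : k[X]) (E : Type*) [Field E] [Algebra k E] [DecidableEq E] :
    Subgroup (GL (Fin 2) k × Perm (f.rootSet E)) where
  carrier := {γ | ∀ x : f.rootSet E,
    γ.1.map (algebraMap k E) • ((x : E) : OnePoint E) = (γ.2 x : E)}
  one_mem' x := by simp
  mul_mem' {γ δ} hγ hδ x := by
    rw [Prod.fst_mul, map_mul, mul_smul, hδ, hγ, Prod.snd_mul, Perm.mul_apply]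
  inv_mem' {γ} hγ x := by
    rw [Prod.fst_inv, map_inv, inv_smul_eq_iff, hγ, Prod.snd_inv, Equiv.Perm.coe_inv,
      Equiv.apply_symm_apply]

variable {E : Type*} [Field E] [Algebra k E] [DecidableEq E] {f : k[X]}

theorem mem_mobiusGraph {M : GL (Fin 2) k} {π : Perm (f.rootSet E)} :
    (M, π) ∈ mobiusGraph f E ↔
      ∀ x : f.rootSet E, M.map (algebraMap k E) • ((x : E) : OnePoint E) = (π x : E) :=
  Iff.rfl

theorem permutesRoots_iff_exists_mem_mobiusGraph (hf : f ≠ 0) {M : GL (Fin 2) k} :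
    PermutesRoots f E M ↔ ∃ π, (M, π) ∈ mobiusGraph f E := by
  have hroots : {x : E | aeval x f = 0} = f.rootSet E := by
    ext x
    rw [Set.mem_ofPred_eq, mem_rootSet_of_ne hf]
  simp only [PermutesRoots, hroots, mem_mobiusGraph, smul_coe_eq_coe_iff_div,
    GeneralLinearGroup.map_apply]
  constructor
  · rintro ⟨hden, hbij⟩
    exact ⟨hbij.equiv, fun x => ⟨hden x (aeval_eq_zero_of_mem_rootSet x.2), rfl⟩⟩
  · rintro ⟨π, hπ⟩
    refine ⟨fun x hx => (hπ ⟨x, (mem_rootSet_of_ne hf).2 hx⟩).1,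
      fun x hx => ?_, fun x hx y hy hxy => ?_, fun y hy => ?_⟩
    · exact Set.mem_of_eq_of_mem (hπ ⟨x, hx⟩).2 (π ⟨x, hx⟩).2
    · have hval : (π ⟨x, hx⟩ : E) = π ⟨y, hy⟩ :=
        (hπ ⟨x, hx⟩).2.symm.trans (hxy.trans (hπ ⟨y, hy⟩).2)
      exact congrArg Subtype.val (π.injective (Subtype.ext hval))
    · refine ⟨π.symm ⟨y, hy⟩, (π.symm ⟨y, hy⟩).2, (hπ _).2.trans ?_⟩
      rw [Equiv.apply_symm_apply]

theorem mem_center_iff_eq_one_of_mem_mobiusGraph (hcard : 2 < Fintype.card (f.rootSet E))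
    {M : GL (Fin 2) k} {π : Perm (f.rootSet E)} (h : (M, π) ∈ mobiusGraph f E) :
    M ∈ Subgroup.center (GL (Fin 2) k) ↔ π = 1 := by
  rw [mem_mobiusGraph] at h
  rw [← map_mem_center_iff (algebraMap k E)]
  constructor
  · intro hM
    ext x
    rw [← OnePoint.coe_eq_coe, ← h, smul_eq_self_of_mem_center hM, Perm.one_apply]
  · rintro rfl
    exact mem_center_of_smul_coe_eq_self hcard Subtype.val_injective h

theorem mem_centralizer_of_mem_mobiusGraph [Fact (f.map (algebraMap k E)).Splits]
    {M : GL (Fin 2) k} {π : Perm (f.rootSet E)} (h : (M, π) ∈ mobiusGraph f E) :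
    π ∈ Subgroup.centralizer ((Gal.galActionHom f E).range : Set (Perm (f.rootSet E))) := by
  classical
  let lift (x : f.rootSet E) : f.SplittingField := (Gal.rootsEquivRoots f E).symm x
  have smul_lift (x : f.rootSet E) :
      M.map (algebraMap k f.SplittingField) • (lift x : OnePoint f.SplittingField) =
        lift (π x) := by
    rw [← map_smul_coe_iff (IsScalarTower.toAlgHom k f.SplittingField E)]
    simpa only [lift, IsScalarTower.coe_toAlgHom', algebraMap_rootsEquivRoots_symm]
      using mem_mobiusGraph.1 h x
  rw [mem_centralizer_range_galActionHom_iff]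
  intro ϕ x
  have hlift : lift (π (ϕ • x)) = lift (ϕ • π x) := by
    rw [← OnePoint.coe_eq_coe, ← smul_lift]
    simp only [lift, rootsEquivRoots_symm_smul]
    exact (map_smul_coe_iff (AlgEquiv.toAlgHom (A₂ := f.SplittingField) ϕ)).2 (smul_lift x)
  exact (Gal.rootsEquivRoots f E).symm.injective (Subtype.ext hlift)

theorem exists_mem_mobiusGraph_of_mem_centralizer [Fact (f.map (algebraMap k E)).Splits]
    (hf : f.Separable) (hfd : f.natDegree = 3) {π : Perm (f.rootSet E)}
    (hπ : π ∈ Subgroup.centralizer ((Gal.galActionHom f E).range : Set (Perm (f.rootSet E)))) :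
    ∃ M, (M, π) ∈ mobiusGraph f E := by
  obtain ⟨g, hg⟩ := exists_aeval_eq_of_mem_centralizer hf hπ
  obtain ⟨A, hA, hAg⟩ := exists_matrix_forall_root_eq_aeval_mul (E := E) hf.ne_zero hfd.le g
  have hcard : Fintype.card (f.rootSet E) = 3 := by
    rw [card_rootSet_eq_natDegree hf Fact.out, hfd]
  have hAπ (x : f.rootSet E) : algebraMap k E (A 0 0) * x + algebraMap k E (A 0 1) =
      π x * (algebraMap k E (A 1 0) * x + algebraMap k E (A 1 1)) := by
    rw [hAg x (mem_rootSet.1 x.2).2, hg]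
  have hmap : A.map (algebraMap k E) ≠ 0 := by
    rwa [Ne, ← Matrix.map_zero _ (map_zero (algebraMap k E)),
      (Matrix.map_injective (algebraMap k E).injective).eq_iff]
  have hdet : A.det ≠ 0 := by
    rw [← map_ne_zero (algebraMap k E), RingHom.map_det]
    exact det_ne_zero_of_mobius_injective (ι := f.rootSet E) (by omega) Subtype.val_injective
      (Subtype.val_injective.comp π.injective) hmap hAπ
  exact ⟨GeneralLinearGroup.mkOfDetNeZero A hdet, fun x => smul_coe_eq_coe_iff.2 (hAπ x)⟩

theorem numRootPermuting_eq_card_map_mobiusGraph (hf : f ≠ 0) :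
    numRootPermuting f E = Nat.card ((mobiusGraph f E).map
      ((QuotientGroup.mk' (Subgroup.center (GL (Fin 2) k))).comp (MonoidHom.fst _ _))) := by
  refine Nat.card_congr (Equiv.subtypeEquivRight fun T => ?_)
  simp only [permutesRoots_iff_exists_mem_mobiusGraph hf]
  constructor
  · rintro ⟨M, rfl, π, h⟩
    exact ⟨(M, π), h, rfl⟩
  · rintro ⟨⟨M, π⟩, h, rfl⟩
    exact ⟨M, rfl, π, h⟩

theorem map_snd_mobiusGraph [Fact (f.map (algebraMap k E)).Splits]
    (hf : f.Separable) (hfd : f.natDegree = 3) :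
    (mobiusGraph f E).map (MonoidHom.snd _ _) =
      Subgroup.centralizer ((Gal.galActionHom f E).range : Set (Perm (f.rootSet E))) := by
  ext π
  constructor
  · rintro ⟨⟨M, π⟩, h, rfl⟩
    exact mem_centralizer_of_mem_mobiusGraph h
  · intro hπ
    obtain ⟨M, h⟩ := exists_mem_mobiusGraph_of_mem_centralizer hf hfd hπ
    exact ⟨(M, π), h, rfl⟩

end RootPermuting

theorem numRootPermuting_eq_card_centralizer {k E : Type*} [Field k] [Field E] [Algebra k E]
    {f : k[X]} [Fact (f.map (algebraMap k E)).Splits] (hf : f.Separable) (hfd : f.natDegree = 3) :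
    numRootPermuting f E = Nat.card
      (Subgroup.centralizer ((Gal.galActionHom f E).range : Set (Perm (f.rootSet E)))) := by
  classical
  have hcard : Fintype.card (f.rootSet E) = 3 := by
    rw [card_rootSet_eq_natDegree hf Fact.out, hfd]
  let toPGL : GL (Fin 2) k × Perm (f.rootSet E) →* GL (Fin 2) k ⧸ Subgroup.center (GL (Fin 2) k) :=
    (QuotientGroup.mk' _).comp (MonoidHom.fst _ _)
  let toPerm : GL (Fin 2) k × Perm (f.rootSet E) →* Perm (f.rootSet E) := MonoidHom.snd _ _
  have hker : (toPGL.domRestrict (mobiusGraph f E)).ker =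
      (toPerm.domRestrict (mobiusGraph f E)).ker := by
    ext ⟨⟨M, π⟩, h⟩
    exact (QuotientGroup.eq_one_iff M).trans
      (mem_center_iff_eq_one_of_mem_mobiusGraph (by omega) h)
  calc numRootPermuting f E = Nat.card ((mobiusGraph f E).map toPGL) :=
        numRootPermuting_eq_card_map_mobiusGraph hf.ne_zero
    _ = Nat.card ((mobiusGraph f E).map toPerm) := by
        rw [← MonoidHom.domRestrict_range, ← MonoidHom.domRestrict_range, ← Subgroup.index_ker,
          hker, Subgroup.index_ker]
    _ = _ := by rw [map_snd_mobiusGraph hf hfd]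

theorem stmt1_general {k E : Type*} [Field k] [DecidableEq k] [Field E] [Algebra k E]
    (f : k[X]) (hf : f.Separable) (hfd : f.natDegree = 3) [IsCyclic f.Gal]
    (hsplits : (f.map (algebraMap k E)).Splits) :
    (f.roots.toFinset.card = 0 → numRootPermuting f E = 3) ∧
    (f.roots.toFinset.card = 1 → numRootPermuting f E = 2) ∧
    (f.roots.toFinset.card = 3 → numRootPermuting f E = 6) := by
  classical
  have : Fact (f.map (algebraMap k E)).Splits := ⟨hsplits⟩
  obtain ⟨σ, hcentralizer, hfixed⟩ := exists_perm_centralizer_eq (E := E) hf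
  have hcard : Fintype.card (f.rootSet E) = 3 := by
    rw [card_rootSet_eq_natDegree hf hsplits, hfd]
  rw [numRootPermuting_eq_card_centralizer hf hfd, hcentralizer, ← hfixed]
  exact card_centralizer_perm_of_card_eq_three hcard σ

/- STATEMENT 1.  Let `k` be a finite field and `f` a separable cubic in `k[x]`.  Let
`n(f)` be the number of elements of `PGL₂(k) = GL₂(k)/center` whose associated linear
fractional transformation permutes the set of roots of `f` (in an algebraic closure;
the roots being affine, such a transformation has nonvanishing denominator at each
root).  Then `n(f) = 3`, `2`, or `6` according as `f` has `0`, `1`, or `3` roots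
in `k`. -/
theorem stmt1 (k : Type*) [Field k] [Fintype k] [DecidableEq k]
    (f : k[X]) (hf : f.Separable) (hfd : f.natDegree = 3)
    (n : ℕ)
    (hn : n = Nat.card {T : Matrix.GeneralLinearGroup (Fin 2) k ⧸
        Subgroup.center (Matrix.GeneralLinearGroup (Fin 2) k) //
      ∃ M : Matrix.GeneralLinearGroup (Fin 2) k, QuotientGroup.mk M = T ∧
        (∀ x : AlgebraicClosure k, aeval x f = 0 →
          algebraMap k (AlgebraicClosure k) (M.val 1 0) * x +
            algebraMap k (AlgebraicClosure k) (M.val 1 1) ≠ 0) ∧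
        Set.BijOn
          (fun x : AlgebraicClosure k =>
            (algebraMap k (AlgebraicClosure k) (M.val 0 0) * x +
                algebraMap k (AlgebraicClosure k) (M.val 0 1)) /
              (algebraMap k (AlgebraicClosure k) (M.val 1 0) * x +
                algebraMap k (AlgebraicClosure k) (M.val 1 1)))
          {x | aeval x f = 0} {x | aeval x f = 0}}) :
    (f.roots.toFinset.card = 0 → n = 3) ∧
    (f.roots.toFinset.card = 1 → n = 2) ∧
    (f.roots.toFinset.card = 3 → n = 6) := by
  have : Finite f.SplittingField := Module.finite_of_finite k
  have : IsCyclic f.Gal := inferInstanceAs (IsCyclic Gal(f.SplittingField/k))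
  exact hn ▸ stmt1_general f hf hfd (IsAlgClosed.splits _)
end

section
/- Let K be an imaginary quadratic field of discriminant Δ and let H be the quaternion algebra over Q generated by the twisted diagonal embedding of K into M_2(K) together with the element i = [[0,-1],[1,0]] (so that i^2 = -1 and αi = iᾱ). Then a rational prime p is unramified in H if and only if -1 is a norm from K ⊗ Q_p to Q_p. Consequently, H is ramified exactly at infinity, at the odd prime divisors of Δ congruent to 3 mod 4, and at 2 if Δ is even and Δ is not congruent to 8 mod 32. -/
open scoped Quaternion

/-!
Splitting `⟨x, y, z, w⟩` into `(x, z)` and `(y, w)`, the reduced norm of the quaternion algebra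
`(a, b)` over a field `F` is `N(x, z) - a N(y, w)`, where `N` is the norm form of `F(√b)`. As norms
are closed under division, the algebra is a division algebra iff `a` is not a norm from `F(√b)`. By
symmetry of this condition, `-1` is a norm from `ℚ_p(√Δ)` iff `Δ` is a sum of two squares in `ℚ_p`.

For odd `p`, Hensel's lemma makes all units, and everything if `p ≡ 1 mod 4`, sums of two squares.
If `p ≡ 3 mod 4`, then `1 + w²` is always a unit, so that sums of two squares have even valuation;
here `Δ` has valuation at most one. For `p = 2` and `4 ∤ d`, sums of two squares are recognised
modulo 8, and this is applied to `d = Δ` or `d = Δ / 4`.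
-/

/-- `a` is a norm from the quadratic algebra `R[X]/(X² - d)`, whose norm form is `x² - d y²`. Over a
field of characteristic `≠ 2` and for `a, d ≠ 0` this says that the Hilbert symbol `(d, a)` is
trivial. -/
def IsQuadraticNorm {R : Type*} [CommRing R] (d a : R) : Prop :=
  ∃ x y : R, x ^ 2 - d * y ^ 2 = a

namespace IsQuadraticNorm

theorem map {R S : Type*} [CommRing R] [CommRing S] (f : R →+* S) {d a : R}
    (h : IsQuadraticNorm d a) : IsQuadraticNorm (f d) (f a) := by
  obtain ⟨x, y, rfl⟩ := h
  exact ⟨f x, f y, by simp only [map_sub, map_mul, map_pow]⟩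

variable {F : Type*} [Field F] {a c d : F}

theorem sq_mul_iff (hc : c ≠ 0) : IsQuadraticNorm d (c ^ 2 * a) ↔ IsQuadraticNorm d a := by
  constructor
  · rintro ⟨x, y, h⟩
    refine ⟨x / c, y / c, ?_⟩
    field_simp
    exact h
  · rintro ⟨x, y, rfl⟩
    exact ⟨c * x, c * y, by ring⟩

theorem div {b : F} (ha : IsQuadraticNorm d a) (hb : IsQuadraticNorm d b) :
    IsQuadraticNorm d (a / b) := by
  obtain ⟨x, y, rfl⟩ := ha
  obtain ⟨z, w, rfl⟩ := hb
  rcases eq_or_ne (z ^ 2 - d * w ^ 2) 0 with h0 | h0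
  · exact ⟨0, 0, by simp [h0]⟩
  · refine ⟨(x * z - d * y * w) / (z ^ 2 - d * w ^ 2), (y * z - x * w) / (z ^ 2 - d * w ^ 2), ?_⟩
    field_simp
    ring

theorem isSquare_of_eq_zero {x y : F} (h : x ^ 2 - d * y ^ 2 = 0) (hxy : ¬ (x = 0 ∧ y = 0)) :
    IsSquare d := by
  have hy : y ≠ 0 := by
    rintro rfl
    exact hxy ⟨by simpa using h, rfl⟩
  refine ⟨x / y, ?_⟩
  field_simp
  linear_combination -h

variable [NeZero (2 : F)]

theorem of_isSquare (hd : IsSquare d) (hd0 : d ≠ 0) (a : F) : IsQuadraticNorm d a := by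
  obtain ⟨c, rfl⟩ := hd
  have hc : c ≠ 0 := left_ne_zero_of_mul hd0
  have h2 : (2 : F) ≠ 0 := two_ne_zero
  refine ⟨(a + 1) / 2, (a - 1) / (2 * c), ?_⟩
  field_simp
  ring

theorem symm (ha : a ≠ 0) (h : IsQuadraticNorm d a) : IsQuadraticNorm a d := by
  obtain ⟨x, y, h⟩ := h
  rcases eq_or_ne y 0 with rfl | hy
  · exact of_isSquare ⟨x, by linear_combination -h⟩ ha d
  · refine ⟨x / y, 1 / y, ?_⟩
    field_simp
    linear_combination h

theorem comm (ha : a ≠ 0) (hd : d ≠ 0) : IsQuadraticNorm d a ↔ IsQuadraticNorm a d :=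
  ⟨symm ha, symm hd⟩

end IsQuadraticNorm

theorem isQuadraticNorm_neg_one_iff_pos {d : ℝ} : IsQuadraticNorm d (-1) ↔ 0 < d := by
  constructor
  · rintro ⟨x, y, h⟩
    have hdy : 0 < d * y ^ 2 := by linarith [sq_nonneg x]
    exact pos_of_mul_pos_left hdy (sq_nonneg y)
  · intro hd
    refine ⟨0, 1 / √d, ?_⟩
    rw [div_pow, Real.sq_sqrt hd.le]
    field_simp
    norm_num

section Quaternion

variable {F : Type*} [Field F]

theorem isUnit_quaternionAlgebra_iff {c₁ c₂ c₃ : F} {x : ℍ[F,c₁,c₂,c₃]} (hx : x ≠ 0) :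
    IsUnit x ↔ (star x * x).re ≠ 0 := by
  constructor
  · intro hu h0
    have hstar : star x * x = 0 := by rw [QuaternionAlgebra.star_mul_eq_coe, h0]; rfl
    exact hx (star_eq_zero.1 (hu.mul_left_eq_zero.1 hstar))
  · intro h0
    have hc : IsUnit (star x * x) := by
      rw [QuaternionAlgebra.star_mul_eq_coe]
      exact (IsUnit.mk0 _ h0).map (algebraMap F ℍ[F,c₁,c₂,c₃])
    have hcomm : Commute (star x) x := by
      rw [QuaternionAlgebra.star_eq_two_re_sub]
      exact .sub_left (QuaternionAlgebra.coe_commutes _ x) (.refl x)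
    exact (hcomm.isUnit_mul_iff.1 hc).2

theorem isQuadraticNorm_iff_not_forall_isUnit [NeZero (2 : F)] {a b : F} (hb : b ≠ 0) :
    IsQuadraticNorm b a ↔ ¬ ∀ x : ℍ[F, a, b], x ≠ 0 → IsUnit x := by
  have norm_eq (x : ℍ[F, a, b]) : (star x * x).re =
      (x.re ^ 2 - b * x.imJ ^ 2) - a * (x.imI ^ 2 - b * x.imK ^ 2) := by
    simp only [QuaternionAlgebra.re_mul, QuaternionAlgebra.re_star, zero_mul, add_zero,
      QuaternionAlgebra.imI_star, mul_neg, neg_mul, QuaternionAlgebra.imJ_star, neg_zero,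
      QuaternionAlgebra.imK_star, sub_neg_eq_add]
    ring
  constructor
  · rintro ⟨u, v, huv⟩ hdiv
    have hx : (⟨u, 1, v, 0⟩ : ℍ[F, a, b]) ≠ 0 := fun h ↦
      one_ne_zero (congrArg QuaternionAlgebra.imI h)
    refine (isUnit_quaternionAlgebra_iff hx).1 (hdiv _ hx) ?_
    rw [norm_eq]
    linear_combination huv
  · intro hdiv
    by_contra hab
    refine hdiv fun x hx ↦ (isUnit_quaternionAlgebra_iff hx).2 fun h0 ↦ hx ?_
    have hsq : ¬ IsSquare b := fun h ↦ hab (.of_isSquare h hb a)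
    rw [norm_eq, sub_eq_zero] at h0
    have hIK : x.imI ^ 2 - b * x.imK ^ 2 = 0 := by
      by_contra hIK
      exact hab (eq_div_of_mul_eq hIK h0.symm ▸ .div ⟨_, _, rfl⟩ ⟨_, _, rfl⟩)
    rw [hIK, mul_zero] at h0
    have anisotropic {y z : F} (h : y ^ 2 - b * z ^ 2 = 0) : y = 0 ∧ z = 0 :=
      not_not.1 fun hyz ↦ hsq (IsQuadraticNorm.isSquare_of_eq_zero h hyz)
    obtain ⟨hre, himJ⟩ := anisotropic h0
    obtain ⟨himI, himK⟩ := anisotropic hIK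
    ext <;> assumption

end Quaternion

section Order

open Module

variable {R A : Type*} [CommRing R] [CommRing A] [Algebra R A]

theorem isCoprime_repr_one (b : Basis (Fin 2) R A) : IsCoprime (b.repr 1 0) (b.repr 1 1) := by
  refine ⟨b.repr (b 0 * b 0) 0, b.repr (b 1 * b 0) 0, ?_⟩
  have h : b 0 = b.repr 1 0 • (b 0 * b 0) + b.repr 1 1 • (b 1 * b 0) := by
    rw [← smul_mul_assoc, ← smul_mul_assoc, ← add_mul, ← Fin.sum_univ_two fun i ↦ b.repr 1 i • b i,
      b.sum_repr, one_mul]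
  simpa [mul_comm] using (congrArg (b.repr · 0) h).symm

theorem exists_basis_apply_zero_eq_one (b : Basis (Fin 2) R A) :
    ∃ c : Basis (Fin 2) R A, c 0 = 1 := by
  obtain ⟨s, r, hsr⟩ := isCoprime_repr_one b
  let v : Fin 2 → A := ![1, -r • b 0 + s • b 1]
  have hdet : b.det v = 1 := by
    have coord_zero : b.repr (v 1) 0 = -r := by simp [v]
    have coord_one : b.repr (v 1) 1 = s := by simp [v]
    simp only [b.det_apply, Matrix.det_fin_two, Basis.toMatrix_apply, coord_zero, coord_one,
      show v 0 = 1 from rfl]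
    linear_combination hsr
  obtain ⟨hli, hspan⟩ := (Basis.is_basis_iff_det b).2 (hdet ▸ isUnit_one)
  exact ⟨.mk hli hspan.ge, by simp [v]⟩

theorem exists_sq_eq_and_discr_eq (b : Basis (Fin 2) R A) (hb : b 0 = 1) :
    ∃ t n : R, b 1 ^ 2 = algebraMap R A t * b 1 - algebraMap R A n ∧
      Algebra.discr R b = t ^ 2 - 4 * n := by
  set t := b.repr (b 1 ^ 2) 1 with ht
  set m := b.repr (b 1 ^ 2) 0
  have hsq : b 1 ^ 2 = m • 1 + t • b 1 := by
    rw [← hb, ← Fin.sum_univ_two fun i ↦ b.repr (b 1 ^ 2) i • b i, b.sum_repr]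
  have trace_one : Algebra.trace R A 1 = 2 := by
    simpa using Algebra.trace_algebraMap_of_basis b (1 : R)
  have trace_b : Algebra.trace R A (b 1) = t := by
    simp [Algebra.trace_eq_matrix_trace b, Matrix.trace, Algebra.leftMulMatrix_eq_repr_mul, hb, ht,
      sq]
  have trace_sq : Algebra.trace R A (b 1 ^ 2) = 2 * m + t ^ 2 := by
    rw [hsq, map_add, map_smul, map_smul, trace_one, trace_b, smul_eq_mul, smul_eq_mul]
    ring
  refine ⟨t, -m, ?_, ?_⟩
  · rw [hsq, Algebra.smul_def, Algebra.smul_def, map_neg]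
    ring
  · simp only [Algebra.discr_def, Matrix.det_fin_two, Algebra.traceMatrix_apply,
      Algebra.traceForm_apply, hb, one_mul, mul_one, ← sq, one_pow, trace_one, trace_b, trace_sq]
    ring

theorem dvd_repr_of_algebraMap_dvd {ι : Type*} (b : Basis ι R A) {r : R} {x : A}
    (h : algebraMap R A r ∣ x) (i : ι) : r ∣ b.repr x i := by
  obtain ⟨y, rfl⟩ := h
  exact ⟨b.repr y i, by rw [← Algebra.smul_def, map_smul, Finsupp.smul_apply, smul_eq_mul]⟩

theorem dvd_of_sq_eq [IsDomain A] [IsIntegrallyClosed A] {k s r x : A}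
    (h : x ^ 2 = k * s * x + k ^ 2 * r) : k ∣ x := by
  rcases eq_or_ne k 0 with rfl | hk
  · simp_all
  have hkL : algebraMap A (FractionRing A) k ≠ 0 := by simpa using hk
  have hint : IsIntegral A (algebraMap A (FractionRing A) x / algebraMap A (FractionRing A) k) := by
    refine ⟨.X ^ 2 - (.C s * .X + .C r), ?_, ?_⟩
    · apply Polynomial.monic_X_pow_sub
      compute_degree!
    · have hL := congrArg (algebraMap A (FractionRing A)) h
      simp only [map_add, map_mul, map_pow] at hL
      simp only [Polynomial.eval₂_sub, Polynomial.eval₂_add, Polynomial.eval₂_mul,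
        Polynomial.eval₂_pow, Polynomial.eval₂_X, Polynomial.eval₂_C]
      field_simp
      linear_combination hL
  obtain ⟨y, hy⟩ := IsIntegrallyClosed.isIntegral_iff.1 hint
  refine ⟨y, IsFractionRing.injective A (FractionRing A) ?_⟩
  rw [map_mul, hy, mul_div_cancel₀ _ hkL]

end Order

/-- A fundamental discriminant, defined through minimality: `Δ ≡ 0, 1 mod 4`, and no `Δ / k²` with
`k ≠ ±1` is again an integer `≡ 0, 1 mod 4`. This includes `Δ = 1`. -/
def IsFundamentalDiscriminant (Δ : ℤ) : Prop :=
  (Δ % 4 = 0 ∨ Δ % 4 = 1) ∧ ∀ k d : ℤ, (d % 4 = 0 ∨ d % 4 = 1) → Δ = k ^ 2 * d → IsUnit k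

namespace IsFundamentalDiscriminant

variable {Δ : ℤ}

theorem ne_zero (hΔ : IsFundamentalDiscriminant Δ) : Δ ≠ 0 := by
  rintro rfl
  exact not_isUnit_zero (hΔ.2 0 0 (by norm_num) (by norm_num))

theorem not_sq_dvd (hΔ : IsFundamentalDiscriminant Δ) {k : ℤ} (hk : Odd k) (hk1 : ¬ IsUnit k) :
    ¬ k ^ 2 ∣ Δ := by
  rintro ⟨d, hd⟩
  refine hk1 (hΔ.2 k d ?_ hd)
  have hmod : Δ % 4 = d % 4 := by
    obtain ⟨m, rfl⟩ := hk
    have : Δ = 4 * ((m ^ 2 + m) * d) + d := by rw [hd]; ring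
    omega
  exact hmod ▸ hΔ.1

theorem exists_eq_four_mul (hΔ : IsFundamentalDiscriminant Δ) (heven : Even Δ) :
    ∃ m, Δ = 4 * m ∧ (m % 4 = 2 ∨ m % 4 = 3) := by
  obtain ⟨m, rfl⟩ : 4 ∣ Δ := by have := hΔ.1; grind
  refine ⟨m, rfl, ?_⟩
  have hm : ¬ (m % 4 = 0 ∨ m % 4 = 1) := fun h ↦ absurd (hΔ.2 2 m h (by ring)) (by decide)
  omega

end IsFundamentalDiscriminant

open Module in
theorem isFundamentalDiscriminant_algebra_discr {A : Type*} [CommRing A] [IsDomain A]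
    [IsIntegrallyClosed A] (b : Basis (Fin 2) ℤ A) :
    IsFundamentalDiscriminant (Algebra.discr ℤ b) := by
  obtain ⟨c, hc⟩ := exists_basis_apply_zero_eq_one b
  obtain ⟨t, n, hω, hD⟩ := exists_sq_eq_and_discr_eq c hc
  rw [Algebra.discr_eq_discr A b c, hD]
  have ht : t ^ 2 % 4 = t % 2 := by
    rcases Int.even_or_odd' t with ⟨m, rfl | rfl⟩ <;> ring_nf <;> omega
  refine ⟨by omega, fun k d hd hkd ↦ ?_⟩
  -- The root `k * (√d + d) / 2` of `X² - k d X + k² (d² - d) / 4` is divisible by `k`, since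
  -- `(√d + d) / 2` is integral.
  obtain ⟨q, hq⟩ : 4 ∣ d ^ 2 - d := by
    rw [show d ^ 2 - d = d * (d - 1) by ring]
    rcases hd with h | h
    · exact dvd_mul_of_dvd_left (by omega) _
    · exact dvd_mul_of_dvd_right (by omega) _
  obtain ⟨e, he⟩ : 2 ∣ k * d - t := by
    have hparity : Even (t ^ 2) ↔ Even (k ^ 2 * d) := by
      rw [← hkd, Int.even_sub]
      simp [show Even (4 : ℤ) by decide]
    rw [← even_iff_two_dvd, Int.even_sub]
    simpa [parity_simps] using hparity.symm
  have hx : (c 1 + e) ^ 2 = k * d * (c 1 + e) + (k : A) ^ 2 * (-q : ℤ) := by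
    have hkq : k ^ 2 * q = t * e + e ^ 2 + n := by
      refine mul_left_cancel₀ (four_ne_zero' ℤ) ?_
      linear_combination (k * d + t + 2 * e) * he + hkd - k ^ 2 * hq
    have hkq' := congrArg (Int.cast : ℤ → A) hkq
    have he' := congrArg (Int.cast : ℤ → A) he
    push_cast [eq_intCast] at hkq' he' hω ⊢
    linear_combination hω + hkq' - (c 1 + e) * he'
  have hdvd := dvd_repr_of_algebraMap_dvd c (dvd_of_sq_eq hx) 1
  have hcoord : c.repr (c 1 + e) 1 = 1 := by
    rw [← mul_one (e : A), ← hc, ← zsmul_eq_mul]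
    simp [-zsmul_eq_mul]
  exact isUnit_of_dvd_one (hcoord ▸ hdvd)

section Padic

theorem isQuadraticNorm_neg_one_of_sq {R : Type*} [CommRing R] {d : R} (b : R)
    (h : IsSquare (d - b ^ 2)) : IsQuadraticNorm (-1) d := by
  obtain ⟨c, hc⟩ := h
  exact ⟨c, b, by linear_combination -hc⟩

variable {p : ℕ} [Fact p.Prime]

theorem isUnit_iff_toZMod_ne_zero {z : ℤ_[p]} : IsUnit z ↔ z.toZMod ≠ 0 := by
  rw [Ne, ← RingHom.mem_ker, PadicInt.ker_toZMod, IsLocalRing.mem_maximalIdeal, mem_nonunits_iff,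
    not_not]

theorem isSquare_of_norm_sq_sub_lt {a c : ℤ_[p]} (h : ‖a ^ 2 - c‖ < ‖2 * a‖ ^ 2) :
    IsSquare c := by
  obtain ⟨z, hz, -⟩ := hensels_lemma (F := (.X ^ 2 - .C c : Polynomial ℤ_[p])) (a := a)
    (by simpa [one_add_one_eq_two] using h)
  exact ⟨z, by simpa [sub_eq_zero, sq, eq_comm] using hz⟩

theorem isSquare_of_isSquare_toZMod (hp : p ≠ 2) {c : ℤ_[p]} (hc : IsUnit c)
    (h : IsSquare c.toZMod) : IsSquare c := by
  obtain ⟨y, hy⟩ := h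
  obtain ⟨a, rfl⟩ := ZMod.ringHom_surjective PadicInt.toZMod y
  have h2a : ‖2 * a‖ = 1 := by
    have h2 : (2 : ZMod p) ≠ 0 := Ring.two_ne_zero (by rwa [ZMod.ringChar_zmod_n])
    have ha : a.toZMod ≠ 0 := by
      intro ha
      exact isUnit_iff_toZMod_ne_zero.1 hc (by rw [hy, ha, mul_zero])
    rw [← PadicInt.isUnit_iff, isUnit_iff_toZMod_ne_zero, map_mul, map_ofNat]
    exact mul_ne_zero h2 ha
  have hred : ‖a ^ 2 - c‖ < 1 := by
    rw [← PadicInt.not_isUnit_iff, isUnit_iff_toZMod_ne_zero, not_not, map_sub, map_pow, hy, sq,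
      sub_self]
  exact isSquare_of_norm_sq_sub_lt (by rwa [h2a, one_pow])

theorem isSquare_of_eight_dvd_sub_one {c : ℤ_[2]} (h : 8 ∣ c - 1) : IsSquare c := by
  apply isSquare_of_norm_sq_sub_lt (a := 1)
  have hc : ‖c - 1‖ ≤ (2 : ℕ) ^ (-(3 : ℕ) : ℤ) := by
    rw [PadicInt.norm_le_pow_iff_mem_span_pow, Ideal.mem_span_singleton]
    exact (show (8 : ℤ_[2]) = (2 : ℕ) ^ 3 by norm_num) ▸ h
  have h2 : ‖(2 : ℤ_[2])‖ = 2⁻¹ := by simpa using PadicInt.norm_p (p := 2)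
  rw [one_pow, mul_one, h2, norm_sub_rev]
  exact hc.trans_lt (by norm_num)

theorem isQuadraticNorm_neg_one_of_isUnit (hp : p ≠ 2) {d : ℤ_[p]} (hd : IsUnit d) :
    IsQuadraticNorm (-1) d := by
  obtain ⟨x, y, hxy⟩ := ZMod.sq_add_sq p d.toZMod
  rw [isUnit_iff_toZMod_ne_zero] at hd
  wlog hx : x ≠ 0 generalizing x y
  · refine this y x (by rw [← hxy, add_comm]) ?_
    rintro rfl
    simp_all
  obtain ⟨b, rfl⟩ := ZMod.ringHom_surjective PadicInt.toZMod y
  have hred : (d - b ^ 2).toZMod = x ^ 2 := by rw [map_sub, map_pow, ← hxy, add_sub_cancel_right]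
  refine isQuadraticNorm_neg_one_of_sq b (isSquare_of_isSquare_toZMod hp ?_ ?_)
  · rw [isUnit_iff_toZMod_ne_zero, hred]
    exact pow_ne_zero 2 hx
  · exact hred ▸ IsSquare.sq x

theorem exists_eq_sq_mul_one_add_sq {d : ℚ_[p]} (h : IsQuadraticNorm (-1) d) :
    ∃ (s : ℚ_[p]) (w : ℤ_[p]), d = s ^ 2 * (1 + w ^ 2 : ℤ_[p]) := by
  obtain ⟨u, v, huv⟩ := h
  wlog hle : ‖v‖ ≤ ‖u‖ generalizing u v
  · exact this v u (by rw [← huv]; ring) (le_of_not_ge hle)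
  rcases eq_or_ne u 0 with rfl | hu
  · have hv : v = 0 := by simpa using hle
    exact ⟨0, 0, by simp [← huv, hv]⟩
  · have hnorm : ‖v / u‖ ≤ 1 := norm_div v u ▸ div_le_one_of_le₀ hle (norm_nonneg u)
    obtain ⟨w, hw⟩ : ∃ w : ℤ_[p], (w : ℚ_[p]) = v / u := ⟨⟨v / u, hnorm⟩, rfl⟩
    refine ⟨u, w, ?_⟩
    push_cast
    rw [hw, ← huv]
    field_simp
    ring

theorem isSquare_neg_one_of_mod_four_ne_three (hp2 : p ≠ 2) (hp : p % 4 ≠ 3) :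
    IsSquare (-1 : ℤ_[p]) := by
  refine isSquare_of_isSquare_toZMod hp2 isUnit_one.neg ?_
  rw [map_neg, map_one]
  exact ZMod.exists_sq_eq_neg_one_iff.2 hp

theorem isUnit_one_add_sq (hp : p % 4 = 3) (w : ℤ_[p]) : IsUnit (1 + w ^ 2) := by
  rw [isUnit_iff_toZMod_ne_zero, map_add, map_one, map_pow]
  intro hw
  exact ZMod.exists_sq_eq_neg_one_iff.1 ⟨w.toZMod, by linear_combination -hw⟩ hp

theorem even_valuation_of_isQuadraticNorm_neg_one (hp : p % 4 = 3) {d : ℚ_[p]}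
    (h : IsQuadraticNorm (-1) d) : Even d.valuation := by
  obtain ⟨s, w, rfl⟩ := exists_eq_sq_mul_one_add_sq h
  rcases eq_or_ne s 0 with rfl | hs
  · simp
  have hw := isUnit_one_add_sq hp w
  have hval : (1 + w ^ 2).valuation = 0 := by
    have hnorm := PadicInt.isUnit_iff.1 hw
    rw [PadicInt.norm_eq_zpow_neg_valuation hw.ne_zero] at hnorm
    have hp1 : (1 : ℝ) < p := by exact_mod_cast (Fact.out : p.Prime).one_lt
    simpa using (zpow_eq_one_iff_right₀ (zero_le_one.trans hp1.le) hp1.ne').1 hnorm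
  rw [Padic.valuation_mul (pow_ne_zero 2 hs) (PadicInt.coe_ne_zero.2 hw.ne_zero),
    Padic.valuation_pow, PadicInt.valuation_coe, hval]
  simp

theorem isQuadraticNorm_neg_one_iff_of_not_sq_dvd (hp : p ≠ 2) {d : ℤ} (hd : ¬ (p : ℤ) ^ 2 ∣ d) :
    IsQuadraticNorm (-1 : ℚ_[p]) d ↔ ¬ (p % 4 = 3 ∧ (p : ℤ) ∣ d) := by
  constructor
  · rintro h ⟨hp3, hdvd⟩
    have hval := even_valuation_of_isQuadraticNorm_neg_one hp3 h
    have h1 : padicValInt p d = 1 := by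
      rw [← pow_one (p : ℤ)] at hdvd
      rw [padicValInt_dvd_iff] at hd hdvd
      grind
    rw [Padic.valuation_intCast, h1] at hval
    exact absurd hval (by decide)
  · intro h
    by_cases hdvd : (p : ℤ) ∣ d
    · have hp3 : p % 4 ≠ 3 := fun hp3 ↦ h ⟨hp3, hdvd⟩
      refine .of_isSquare ?_ (neg_ne_zero.2 one_ne_zero) _
      simpa using (isSquare_neg_one_of_mod_four_ne_three hp hp3).map PadicInt.Coe.ringHom
    · have hu : IsUnit (d : ℤ_[p]) := by
        rw [isUnit_iff_toZMod_ne_zero, map_intCast, Ne, ZMod.intCast_zmod_eq_zero_iff_dvd]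
        exact hdvd
      simpa using (isQuadraticNorm_neg_one_of_isUnit hp hu).map PadicInt.Coe.ringHom

theorem norm_le_one_of_eq_sq_mul_one_add_sq {s : ℚ_[2]} {w d : ℤ_[2]}
    (h : d = s ^ 2 * (1 + w ^ 2 : ℤ_[2])) : ‖s‖ ≤ 1 := by
  by_contra! hs
  -- `s⁻¹` is then even, so that `-1` would be a square modulo 4.
  have hs0 : s ≠ 0 := norm_pos_iff.1 (one_pos.trans hs)
  have hinv : ‖s⁻¹‖ < 1 := norm_inv s ▸ inv_lt_one_of_one_lt₀ hs
  obtain ⟨t, ht⟩ : ∃ t : ℤ_[2], (t : ℚ_[2]) = s⁻¹ := ⟨⟨s⁻¹, hinv.le⟩, rfl⟩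
  rw [← ht, ← PadicInt.norm_def, PadicInt.norm_lt_one_iff_dvd, Nat.cast_ofNat] at hinv
  obtain ⟨r, rfl⟩ := hinv
  have heq : d * (2 * r) ^ 2 = 1 + w ^ 2 := by
    apply PadicInt.ext
    rw [PadicInt.coe_mul, PadicInt.coe_pow, ht, h]
    field_simp
  have hmod := congrArg (PadicInt.toZModPow 2) heq
  simp only [map_mul, map_add, map_pow, map_one, map_ofNat] at hmod
  generalize PadicInt.toZModPow 2 d = d₀, PadicInt.toZModPow 2 r = r₀,
    PadicInt.toZModPow 2 w = w₀ at hmod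
  revert d₀ r₀ w₀
  decide

theorem isQuadraticNorm_neg_one_iff_of_not_four_dvd {d : ℤ} (hd : ¬ 4 ∣ d) :
    IsQuadraticNorm (-1 : ℚ_[2]) d ↔ d % 4 = 1 ∨ d % 8 = 2 := by
  constructor
  · intro h
    obtain ⟨s, w, hsw⟩ := exists_eq_sq_mul_one_add_sq h
    rw [← PadicInt.coe_intCast] at hsw
    obtain ⟨t, rfl⟩ : ∃ t : ℤ_[2], (t : ℚ_[2]) = s :=
      ⟨⟨s, norm_le_one_of_eq_sq_mul_one_add_sq hsw⟩, rfl⟩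
    have heq : (d : ℤ_[2]) = t ^ 2 * (1 + w ^ 2) :=
      PadicInt.ext (by rw [hsw, PadicInt.coe_mul, PadicInt.coe_pow])
    have hmod : (d : ZMod (2 ^ 3)) = t.toZModPow 3 ^ 2 * (1 + w.toZModPow 3 ^ 2) := by
      simpa only [map_intCast, map_mul, map_add, map_pow, map_one] using
        congrArg (PadicInt.toZModPow 3) heq
    by_contra hne
    have hd8 : d % (2 ^ 3 : ℕ) = 3 ∨ d % (2 ^ 3 : ℕ) = 6 ∨ d % (2 ^ 3 : ℕ) = 7 := by omega
    have not_sq_mul : ∀ a b : ZMod (2 ^ 3), a ^ 2 * (1 + b ^ 2) ≠ 3 ∧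
        a ^ 2 * (1 + b ^ 2) ≠ 6 ∧ a ^ 2 * (1 + b ^ 2) ≠ 7 := by decide
    obtain ⟨h3, h6, h7⟩ := not_sq_mul (t.toZModPow 3) (w.toZModPow 3)
    rw [← hmod, ← ZMod.intCast_mod] at h3 h6 h7
    rcases hd8 with h | h | h <;> rw [h] at h3 h6 h7
    exacts [h3 rfl, h6 rfl, h7 rfl]
  · intro h
    obtain ⟨b, hb⟩ : ∃ b : ℤ, 8 ∣ d - b ^ 2 - 1 := by
      have : d % 8 = 1 ∨ d % 8 = 5 ∨ d % 8 = 2 := by omega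
      rcases this with h | h | h
      exacts [⟨0, by omega⟩, ⟨2, by omega⟩, ⟨1, by omega⟩]
    have hsq : IsSquare (d - b ^ 2 : ℤ_[2]) :=
      isSquare_of_eight_dvd_sub_one (by exact_mod_cast map_dvd (Int.castRingHom ℤ_[2]) hb)
    simpa using (isQuadraticNorm_neg_one_of_sq _ hsq).map PadicInt.Coe.ringHom

end Padic

namespace IsFundamentalDiscriminant

theorem isQuadraticNorm_neg_one_iff {Δ : ℤ} (hΔ : IsFundamentalDiscriminant Δ) (p : ℕ)
    [hp : Fact p.Prime] :
    IsQuadraticNorm (Δ : ℚ_[p]) (-1) ↔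
      ¬ ((p % 4 = 3 ∧ (p : ℤ) ∣ Δ) ∨ (p = 2 ∧ Even Δ ∧ ¬ Δ % 32 = 8)) := by
  rw [IsQuadraticNorm.comm (neg_ne_zero.2 one_ne_zero) (Int.cast_ne_zero.2 hΔ.ne_zero)]
  rcases eq_or_ne p 2 with rfl | hp2
  · by_cases heven : Even Δ
    · obtain ⟨m, rfl, hm⟩ := hΔ.exists_eq_four_mul heven
      have hscale : ((4 * m : ℤ) : ℚ_[2]) = 2 ^ 2 * m := by push_cast; norm_num
      rw [hscale, IsQuadraticNorm.sq_mul_iff two_ne_zero,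
        isQuadraticNorm_neg_one_iff_of_not_four_dvd (by omega)]
      rw [Int.even_iff]
      omega
    · have hΔ4 := hΔ.1
      rw [Int.even_iff] at heven
      rw [isQuadraticNorm_neg_one_iff_of_not_four_dvd (by omega), Int.even_iff]
      omega
  · have hsq : ¬ (p : ℤ) ^ 2 ∣ Δ :=
      hΔ.not_sq_dvd (by exact_mod_cast hp.out.odd_of_ne_two hp2)
        (Nat.prime_iff_prime_int.1 hp.out).not_isUnit
    simp [isQuadraticNorm_neg_one_iff_of_not_sq_dvd hp2 hsq, hp2]

end IsFundamentalDiscriminant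

section QuadraticField

open NumberField Module

theorem isTotallyComplex_iff_isEmpty_ringHom_real {K : Type*} [Field K] :
    IsTotallyComplex K ↔ IsEmpty (K →+* ℝ) := by
  refine ⟨fun _ ↦ ⟨fun φ ↦ ?_⟩, fun h ↦ ⟨fun v ↦ ?_⟩⟩
  · have hφ : ComplexEmbedding.IsReal (Complex.ofRealHom.comp φ) :=
      RingHom.ext fun x ↦ Complex.conj_ofReal (φ x)
    exact InfinitePlace.not_isReal_iff_isComplex.2 (IsTotallyComplex.isComplex _)
      (InfinitePlace.isReal_mk_iff.2 hφ)
  · rw [← InfinitePlace.not_isReal_iff_isComplex]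
    exact fun hv ↦ h.false (InfinitePlace.embedding_of_isReal hv)

variable {K : Type*} [Field K] [NumberField K]

theorem isFundamentalDiscriminant_discr (hK : finrank ℚ K = 2) :
    IsFundamentalDiscriminant (discr K) := by
  have hrank : finrank ℤ (𝓞 K) = 2 := by rw [RingOfIntegers.rank, hK]
  rw [← discr_eq_discr K (finBasisOfFinrankEq ℤ (𝓞 K) hrank)]
  exact isFundamentalDiscriminant_algebra_discr _

theorem discr_neg_iff_isEmpty_ringHom_real (hK : finrank ℚ K = 2) :
    discr K < 0 ↔ IsEmpty (K →+* ℝ) := by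
  have hcard := InfinitePlace.card_add_two_mul_card_eq_rank K
  rw [hK] at hcard
  rw [← Int.sign_eq_neg_one_iff_neg, sign_discr,
    ← isTotallyComplex_iff_isEmpty_ringHom_real, ← nrRealPlaces_eq_zero_iff]
  obtain ⟨h1, h2⟩ | ⟨h1, h2⟩ :
      InfinitePlace.nrRealPlaces K = 0 ∧ InfinitePlace.nrComplexPlaces K = 1 ∨
      InfinitePlace.nrRealPlaces K = 2 ∧ InfinitePlace.nrComplexPlaces K = 0 := by omega
  all_goals simp [h1, h2]

end QuadraticField

theorem stmt4_general (K : Type*) [Field K] [NumberField K] (hdeg : Module.finrank ℚ K = 2)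
    (Δ : ℤ) (hΔ : Δ = NumberField.discr K) :
    (∀ (p : ℕ) [Fact p.Prime],
      (∃ a b : ℚ_[p], a ^ 2 - (Δ : ℚ_[p]) * b ^ 2 = -1) ↔
        ¬ (∀ x : ℍ[ℚ_[p], -1, (Δ : ℚ_[p])], x ≠ 0 → IsUnit x)) ∧
    ((∀ x : ℍ[ℝ, -1, (Δ : ℝ)], x ≠ 0 → IsUnit x) ↔ IsEmpty (K →+* ℝ)) ∧
    (∀ (p : ℕ) [Fact p.Prime],
      (∀ x : ℍ[ℚ_[p], -1, (Δ : ℚ_[p])], x ≠ 0 → IsUnit x) ↔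
        ((p % 4 = 3 ∧ (p : ℤ) ∣ Δ) ∨ (p = 2 ∧ Even Δ ∧ ¬ Δ % 32 = 8))) := by
  have hfund : IsFundamentalDiscriminant Δ := hΔ ▸ isFundamentalDiscriminant_discr hdeg
  have split_iff (F : Type) [Field F] [CharZero F] :
      IsQuadraticNorm (Δ : F) (-1) ↔ ¬ ∀ x : ℍ[F, -1, (Δ : F)], x ≠ 0 → IsUnit x :=
    isQuadraticNorm_iff_not_forall_isUnit (Int.cast_ne_zero.2 hfund.ne_zero)
  refine ⟨fun p _ ↦ split_iff ℚ_[p], ?_, fun p _ ↦ ?_⟩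
  · rw [← not_iff_not, ← split_iff ℝ, isQuadraticNorm_neg_one_iff_pos, Int.cast_pos,
      ← discr_neg_iff_isEmpty_ringHom_real hdeg, ← hΔ, not_lt, hfund.ne_zero.symm.le_iff_lt]
  · rw [← not_iff_not, ← split_iff ℚ_[p], hfund.isQuadraticNorm_neg_one_iff p]

/- STATEMENT 4.  Let `K` be an imaginary quadratic field of discriminant `Δ`, and let
`H` be the quaternion algebra over `ℚ` generated by the twisted diagonal embedding of
`K` into `M₂(K)` together with `i = [[0,-1],[1,0]]` (so `i² = -1`, `αi = iᾱ`); with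
`j = √Δ` one has `j² = Δ` and `ij = -ji`, i.e. `H ≅ (-1, Δ)_ℚ = ℍ[ℚ, -1, Δ]`.  A prime
`p` is unramified in `H` (i.e. `H ⊗ ℚ_p = ℍ[ℚ_p, -1, Δ]` is not a division ring) iff
`-1` is a norm from `K ⊗ ℚ_p = ℚ_p(√Δ)` to `ℚ_p` (i.e. `-1 = a² - Δb²` is solvable in
`ℚ_p`).  Consequently `H` is ramified at infinity, and at a finite prime `p` exactly
when `p ≡ 3 mod 4` divides `Δ`, or `p = 2`, `Δ` is even and `Δ ≢ 8 mod 32`. -/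
theorem stmt4 (K : Type*) [Field K] [NumberField K]
    (hdeg : Module.finrank ℚ K = 2) (himag : IsEmpty (K →+* ℝ))
    (Δ : ℤ) (hΔ : Δ = NumberField.discr K) :
    (∀ (p : ℕ) [Fact p.Prime],
      (∃ a b : ℚ_[p], a ^ 2 - (Δ : ℚ_[p]) * b ^ 2 = -1) ↔
        ¬ (∀ x : ℍ[ℚ_[p], -1, (Δ : ℚ_[p])], x ≠ 0 → IsUnit x)) ∧
    (∀ x : ℍ[ℝ, -1, (Δ : ℝ)], x ≠ 0 → IsUnit x) ∧
    (∀ (p : ℕ) [Fact p.Prime],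
      (∀ x : ℍ[ℚ_[p], -1, (Δ : ℚ_[p])], x ≠ 0 → IsUnit x) ↔
        ((p % 4 = 3 ∧ (p : ℤ) ∣ Δ) ∨ (p = 2 ∧ Even Δ ∧ ¬ Δ % 32 = 8))) :=
  (stmt4_general K hdeg Δ hΔ).imp_right (.imp_left fun h ↦ h.2 himag)
end
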